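/- arXiv:1509.04970 — 6 statements merged into one kernel-verified Lean document; each statement's English description precedes it below -/
import Mathlib

section
/- Let G ⊆ M_n(ℂ) be an irreducible group of matrices that is block monomial with respect to a decomposition ℂ^n = V_1 ⊕ … ⊕ V_r with r > 1 and each V_i ≠ 0. Then all V_i have equal dimension n/r, and there is a simultaneous similarity of G, leaving each V_i invariant and identifying each V_i with ℂ^{n/r}, after which the set of nonzero (i,j)-block entries {P_i G P_j : G ∈ G} \ {0} is, for every pair (i,j), equal to one fixed irreducible matrix group H ⊆ M_{n/r}(ℂ). -/
open Matrix BigOperators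
open scoped Classical

noncomputable section

abbrev Mat (n : ℕ) := Matrix (Fin n) (Fin n) ℂ

/-- A set of matrices is irreducible if the only invariant subspaces are `⊥` and `⊤`. -/
def IrreducibleSet {n : ℕ} (S : Set (Mat n)) : Prop :=
  ∀ W : Submodule ℂ (Fin n → ℂ),
    (∀ A ∈ S, ∀ v ∈ W, A.mulVec v ∈ W) → W = ⊥ ∨ W = ⊤

/-- All complex eigenvalues are real. -/
def RealSpectrum {n : ℕ} (M : Mat n) : Prop :=
  ∀ z ∈ spectrum ℂ M, z.im = 0

/-- A set of matrices forming a group of invertible matrices under multiplication. -/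
def IsMatGroup {n : ℕ} (G : Set (Mat n)) : Prop :=
  (1 : Mat n) ∈ G ∧ (∀ A ∈ G, ∀ B ∈ G, A * B ∈ G) ∧
    ∀ A ∈ G, IsUnit A ∧ A⁻¹ ∈ G

/-- Monomial matrix: exactly one nonzero entry in each row and each column. -/
def IsMonomialMat {n : ℕ} (M : Mat n) : Prop :=
  (∀ i, ∃! j, M i j ≠ 0) ∧ ∀ j, ∃! i, M i j ≠ 0

/-- Pattern of a matrix: nonzero entries replaced by 1. -/
def patMat {n : ℕ} (M : Mat n) : Mat n :=
  Matrix.of fun i j => if M i j = 0 then 0 else 1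

/-- Signed permutation matrix. -/
def IsSignedPermMat {n : ℕ} (M : Mat n) : Prop :=
  IsMonomialMat M ∧ ∀ i j, M i j = 0 ∨ M i j = 1 ∨ M i j = -1

/-- Permutation matrix associated to `σ` (sending `e j` to `e (σ j)`). -/
def permMat {n : ℕ} (σ : Equiv.Perm (Fin n)) : Mat n :=
  Matrix.of fun i j => if i = σ j then 1 else 0

def IsPermMat {n : ℕ} (M : Mat n) : Prop := ∃ σ : Equiv.Perm (Fin n), M = permMat σ

/-- The cyclic permutation matrix `C_n`, sending `e i` to `e (i+1 mod n)`. -/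
def cycMat (n : ℕ) : Mat n :=
  Matrix.of fun i j => if (i : ℕ) = ((j : ℕ) + 1) % n then 1 else 0

/-- The cyclic group `𝒞_n` generated by `C_n`. -/
def cycSet (n : ℕ) : Set (Mat n) := {M | ∃ k : ℕ, M = cycMat n ^ k}

/-- Signed diagonal matrix: member of `D_n(±1)`. -/
def IsSignedDiag {n : ℕ} (M : Mat n) : Prop :=
  ∃ d : Fin n → ℂ, (∀ i, d i = 1 ∨ d i = -1) ∧ M = Matrix.diagonal d

/-- `avg_G(D) = D · D^G · … · D^(G^(m-1))` where `m = orderOf G` and `D^G = G⁻¹ D G`. -/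
def avgMat {n : ℕ} (G D : Mat n) : Mat n :=
  ((List.range (orderOf G)).map fun k => (G ^ k)⁻¹ * D * G ^ k).prod

/-- `J_K = {J ∈ D_n(±1) : avg_G(J) = det(J)·I for all G ∈ K \ {I}}`. -/
def Jset {n : ℕ} (K : Set (Mat n)) : Set (Mat n) :=
  {J | IsSignedDiag J ∧ ∀ G ∈ K, G ≠ 1 → avgMat G J = J.det • (1 : Mat n)}

/-- `J_K^+ = {J ∈ J_K : det J = 1}`. -/
def JsetPlus {n : ℕ} (K : Set (Mat n)) : Set (Mat n) :=
  {J | J ∈ Jset K ∧ J.det = 1}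

/-- Realizable: simultaneously similar to a set of real-entried matrices. -/
def Realizable {n : ℕ} (S : Set (Mat n)) : Prop :=
  ∃ T : Mat n, IsUnit T ∧ ∀ A ∈ S, ∀ i j, ((T⁻¹ * A * T) i j).im = 0

/-- Indecomposable: no common invariant standard subspace except `0` and `ℂ^n`. -/
def IndecomposableSet {n : ℕ} (S : Set (Mat n)) : Prop :=
  ∀ I : Set (Fin n),
    (∀ A ∈ S, ∀ j ∈ I, ∀ i, A i j ≠ 0 → i ∈ I) → I = ∅ ∨ I = Set.univ

/-- Kronecker product, identified with a matrix over `Fin (m*n)` canonically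
(first factor's index is the block index). -/
def kron {m n : ℕ} (A : Mat m) (B : Mat n) : Mat (m * n) :=
  Matrix.reindex finProdFinEquiv finProdFinEquiv (Matrix.kroneckerMap (· * ·) A B)

end

section Helpers

theorem aux_trans {n r : ℕ} (G : Set (Mat n)) (hgrp : IsMatGroup G)
    (hirr : IrreducibleSet G)
    (V : Fin r → Submodule ℂ (Fin n → ℂ))
    (hind : iSupIndep V)
    (hV : ∀ i, V i ≠ ⊥)
    (hbm : ∀ A ∈ G, ∀ i, ∃ j, ∀ v ∈ V i, A.mulVec v ∈ V j) (i j : Fin r) :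
    ∃ A ∈ G, ∀ v ∈ V i, A.mulVec v ∈ V j := by
  by_contra hno
  let S : Set (Fin r) := {k | ∃ A ∈ G, ∀ v ∈ V i, A.mulVec v ∈ V k}
  have hj : j ∉ S := hno
  have hi : i ∈ S := ⟨1, hgrp.1, fun v hv => by simpa using hv⟩
  have hd := hind.disjoint_biSup hj
  rcases hirr (⨆ k ∈ S, V k) (by
    intro A hA v hv
    have hle : (⨆ k ∈ S, V k) ≤ (⨆ k ∈ S, V k).comap (Matrix.mulVecLin A) := by
      refine iSup₂_le fun k hk w hw => ?_
      obtain ⟨B, hB, hBk⟩ := hk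
      obtain ⟨l, hl⟩ := hbm A hA k
      have hl' : l ∈ S := ⟨A * B, hgrp.2.1 A hA B hB, fun v hv => by
        rw [← Matrix.mulVec_mulVec]; exact hl _ (hBk v hv)⟩
      exact (le_iSup₂ (f := fun k (_ : k ∈ S) => V k) l hl') (hl w hw)
    exact hle hv) with h | h
  · apply hV i
    rw [eq_bot_iff, ← h]
    exact le_iSup₂ (f := fun k (_ : k ∈ S) => V k) i hi
  · rw [h, disjoint_top] at hd
    exact hV j hd

theorem aux_inv {n r : ℕ} (G : Set (Mat n)) (hgrp : IsMatGroup G)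
    (V : Fin r → Submodule ℂ (Fin n → ℂ))
    (hind : iSupIndep V)
    (hV : ∀ i, V i ≠ ⊥)
    (hbm : ∀ A ∈ G, ∀ i, ∃ j, ∀ v ∈ V i, A.mulVec v ∈ V j) (i j : Fin r)
    (A : Mat n) (hA : A ∈ G) (h : ∀ v ∈ V i, A.mulVec v ∈ V j) :
    ∀ v ∈ V j, A⁻¹.mulVec v ∈ V i := by
  obtain ⟨k, hk⟩ := hbm A⁻¹ (hgrp.2.2 A hA).2 j
  obtain ⟨v, hv, hv0⟩ := (Submodule.ne_bot_iff _).1 (hV i)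
  have h1 := hk _ (h v hv)
  have hdet := (Matrix.isUnit_iff_isUnit_det A).1 (hgrp.2.2 A hA).1
  rw [Matrix.mulVec_mulVec, Matrix.nonsing_inv_mul _ hdet, Matrix.one_mulVec] at h1
  have : k = i := by
    by_contra hne
    exact hv0 (Submodule.disjoint_def.1 (hind.pairwiseDisjoint hne) v h1 hv)
  exact this ▸ hk

/-- The core of the argument, after coordinates have been chosen. -/
theorem aux_core {n r d : ℕ} (hd : 0 < d) (i0 : Fin r) (G : Set (Mat n)) (hgrp : IsMatGroup G)
    (hirr : IrreducibleSet G)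
    (V : Fin r → Submodule ℂ (Fin n → ℂ))
    (hbm : ∀ A ∈ G, ∀ i, ∃ j, ∀ v ∈ V i, A.mulVec v ∈ V j)
    (T : Fin r → Mat n) (hT : ∀ i, T i ∈ G)
    (C : Matrix (Fin n) (Fin d) ℂ)
    (φ : (Fin n → ℂ) ≃ₗ[ℂ] (Fin r × Fin d → ℂ))
    (L1 : ∀ i w q, φ (T i *ᵥ (C *ᵥ w)) q = if q.1 = i then w q.2 else 0)
    (F1 : ∀ i, ∀ v : Fin n → ℂ,
        v ∈ V i ↔ ∀ q : Fin r × Fin d, q.1 ≠ i → φ v q = 0) :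
    ∃ (H : Set (Matrix (Fin d) (Fin d) ℂ)),
      IsMatGroup H ∧ IrreducibleSet H ∧
      ∀ i j : Fin r,
        {B : Matrix (Fin d) (Fin d) ℂ | B ≠ 0 ∧ ∃ A ∈ G,
          B = Matrix.of fun x y =>
            LinearMap.toMatrix'
              ((φ.toLinearMap ∘ₗ Matrix.mulVecLin A) ∘ₗ φ.symm.toLinearMap)
              (i, x) (j, y)} = H := by
  have hdet : ∀ A ∈ G, IsUnit A.det := fun A hA =>
    (Matrix.isUnit_iff_isUnit_det A).1 (hgrp.2.2 A hA).1
  have hli : ∀ A ∈ G, A⁻¹ * A = 1 := fun A hA => Matrix.nonsing_inv_mul _ (hdet A hA)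
  have hri : ∀ A ∈ G, A * A⁻¹ = 1 := fun A hA => Matrix.mul_nonsing_inv _ (hdet A hA)
  have hinj : ∀ i, Function.Injective (fun w => T i *ᵥ (C *ᵥ w)) := by
    intro i w w' h
    funext x
    have h1 := L1 i w (i, x)
    have h2 := L1 i w' (i, x)
    simp only at h
    rw [h, h2] at h1
    simpa using h1.symm
  have hCinj : Function.Injective (fun w => C *ᵥ w) := by
    intro w w' h
    apply hinj i0
    simp only at h ⊢
    rw [h]
  have hTV : ∀ i w, T i *ᵥ (C *ᵥ w) ∈ V i := by
    intro i w
    rw [F1]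
    intro q hq
    rw [L1, if_neg hq]
  have L2 : ∀ v, v = ∑ i, T i *ᵥ (C *ᵥ (fun x => φ v (i, x))) := by
    intro v
    apply φ.injective
    funext q
    rw [map_sum, Finset.sum_apply]
    simp only [L1]
    simp
  have L3 : ∀ i, ∀ v ∈ V i, v = T i *ᵥ (C *ᵥ (fun x => φ v (i, x))) := by
    intro i v hv
    apply φ.injective
    funext q
    rw [L1]
    split_ifs with h
    · rw [← h]
    · exact (F1 i v).1 hv q h
  -- block of A when A maps V j to V i
  have L4 : ∀ i j (A : Mat n), (∀ v ∈ V j, A *ᵥ v ∈ V i) →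
      A * (T j * C) = T i * C * (Matrix.of fun x y => φ (A *ᵥ (T j *ᵥ (C *ᵥ Pi.single y 1))) (i, x)) := by
    intro i j A h
    apply Matrix.ext_of_mulVec_single
    intro y
    have := L3 i _ (h _ (hTV j (Pi.single y 1)))
    simp only [← Matrix.mulVec_mulVec]
    refine this.trans ?_
    congr 2
    funext x
    rw [Matrix.mulVec_single_one (Matrix.of _)]
    rfl
  have hmat : ∀ A i j, (Matrix.of fun x y =>
            LinearMap.toMatrix'
              ((φ.toLinearMap ∘ₗ Matrix.mulVecLin A) ∘ₗ φ.symm.toLinearMap)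
              (i, x) (j, y)) = (Matrix.of fun x y => φ (A *ᵥ (T j *ᵥ (C *ᵥ Pi.single y 1))) (i, x)) := by
    intro A i j
    ext x y
    simp only [Matrix.of_apply, LinearMap.toMatrix'_apply, LinearMap.comp_apply,
      LinearEquiv.coe_coe, Matrix.mulVecLin_apply]
    have : φ.symm (Pi.single (j, y) 1) = T j *ᵥ (C *ᵥ Pi.single y 1) := by
      rw [LinearEquiv.symm_apply_eq]
      funext q
      rw [L1]
      rcases q with ⟨k, z⟩
      simp only [Pi.single_apply, Prod.mk.injEq]
      by_cases h1 : k = j <;> by_cases h2 : z = y <;> simp [h1, h2]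
    rw [← this]
  let H : Set (Matrix (Fin d) (Fin d) ℂ) := {B | ∃ g ∈ G, g * C = C * B}
  have hHunit : ∀ B ∈ H, IsUnit B := by
    rintro B ⟨g, hg, h⟩
    rw [← Matrix.mulVec_injective_iff_isUnit]
    intro w w' hw
    apply hCinj
    have hgi := Matrix.mulVec_injective_iff_isUnit.2 (hgrp.2.2 g hg).1
    apply hgi
    simp only [Matrix.mulVec_mulVec, h]
    simp only [← Matrix.mulVec_mulVec]
    rw [hw]
  have hHof : ∀ i j, ∀ A ∈ G, (∀ v ∈ V j, A *ᵥ v ∈ V i) →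
      ∀ B, A * (T j * C) = T i * C * B → B ∈ H := by
    intro i j A hA _ B hB
    refine ⟨(T i)⁻¹ * (A * T j), hgrp.2.1 _ (hgrp.2.2 _ (hT i)).2 _ (hgrp.2.1 _ hA _ (hT j)), ?_⟩
    rw [Matrix.mul_assoc, Matrix.mul_assoc, hB, Matrix.mul_assoc, ← Matrix.mul_assoc, hli _ (hT i),
      Matrix.one_mul]
  refine ⟨H, ⟨⟨1, hgrp.1, by simp⟩, ?_, ?_⟩, ?_, ?_⟩
  · rintro A ⟨g, hg, h⟩ B ⟨g', hg', h'⟩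
    refine ⟨g * g', hgrp.2.1 _ hg _ hg', ?_⟩
    rw [Matrix.mul_assoc, h', ← Matrix.mul_assoc, h, Matrix.mul_assoc]
  · intro B hB
    refine ⟨hHunit B hB, ?_⟩
    have hBd := (Matrix.isUnit_iff_isUnit_det B).1 (hHunit B hB)
    obtain ⟨g, hg, h⟩ := hB
    refine ⟨g⁻¹, (hgrp.2.2 g hg).2, ?_⟩
    calc g⁻¹ * C = g⁻¹ * (C * B) * B⁻¹ := by
          rw [Matrix.mul_assoc, Matrix.mul_assoc, Matrix.mul_nonsing_inv _ hBd, Matrix.mul_one]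
      _ = C * B⁻¹ := by rw [← h, ← Matrix.mul_assoc, hli g hg, Matrix.one_mul]
  · intro W hW
    let U : Submodule ℂ (Fin n → ℂ) :=
      { carrier := {v | ∀ i, (fun x => φ v (i, x)) ∈ W}
        add_mem' := by
          intro a b ha hb i
          simp only [map_add]
          exact W.add_mem (ha i) (hb i)
        zero_mem' := by
          intro i
          simp only [map_zero]
          exact W.zero_mem
        smul_mem' := by
          intro c a ha i
          simp only [map_smul]
          exact W.smul_mem c (ha i) }
    have hU : ∀ i, ∀ w ∈ W, T i *ᵥ (C *ᵥ w) ∈ U := by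
      intro i w hw k
      simp only [L1]
      split_ifs
      · exact hw
      · exact W.zero_mem
    rcases hirr U (by
      intro A hA v hv
      rw [L2 v, Matrix.mulVec_sum]
      refine U.sum_mem fun i _ => ?_
      obtain ⟨k, hk⟩ := hbm A hA i
      have h4 := L4 k i A hk
      have hBH := hHof k i A hA hk _ h4
      rw [Matrix.mulVec_mulVec, Matrix.mulVec_mulVec, Matrix.mul_assoc, h4,
        ← Matrix.mulVec_mulVec, ← Matrix.mulVec_mulVec]
      exact hU k _ (hW _ hBH _ (hv i))) with h | h
    · left
      rw [eq_bot_iff]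
      intro w hw
      have h0 := hU i0 w hw
      rw [h, Submodule.mem_bot] at h0
      rw [Submodule.mem_bot]
      apply hinj i0
      simp [h0]
    · right
      rw [eq_top_iff]
      intro w _
      have h0 : T i0 *ᵥ (C *ᵥ w) ∈ U := by rw [h]; trivial
      have := h0 i0
      simp only [L1, if_true] at this
      exact this
  · intro i j
    ext B
    constructor
    · rintro ⟨hB0, A, hA, hB⟩
      rw [hmat] at hB
      obtain ⟨k, hk⟩ := hbm A hA j
      by_cases hki : k = i
      · subst hki
        have := L4 k j A hk
        rw [← hB] at this
        exact hHof k j A hA hk B this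
      · exfalso
        apply hB0
        rw [hB]
        ext x y
        exact (F1 k _).1 (hk _ (hTV j _)) (i, x) (fun h => hki h.symm)
    · intro hBH
      have hBu := hHunit B hBH
      obtain ⟨g, hg, h⟩ := hBH
      refine ⟨?_, T i * (g * (T j)⁻¹), hgrp.2.1 _ (hT i) _ (hgrp.2.1 _ hg _ (hgrp.2.2 _ (hT j)).2), ?_⟩
      · have : Nonempty (Fin d) := ⟨⟨0, hd⟩⟩
        exact hBu.ne_zero
      · rw [hmat]
        ext x y
        have : (T i * (g * (T j)⁻¹)) *ᵥ (T j *ᵥ (C *ᵥ Pi.single y 1)) =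
            T i *ᵥ (C *ᵥ (B *ᵥ Pi.single y 1)) := by
          simp only [Matrix.mulVec_mulVec]
          congr 1
          rw [← h]
          simp only [Matrix.mul_assoc]
          rw [← Matrix.mul_assoc (T j)⁻¹, hli _ (hT j), Matrix.one_mul]
        rw [Matrix.of_apply, this, L1]
        simp

end Helpers

/-- structure of an irreducible group that is block monomial with respect
to a direct sum decomposition `ℂ^n = V_1 ⊕ … ⊕ V_r`, `r > 1`, all `V_i ≠ 0`:
the `V_i` all have dimension `n/r` and, after a simultaneous similarity leaving each
`V_i` invariant and identifying each `V_i` with `ℂ^{n/r}` (encoded by a linear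
equivalence `φ` carrying each `V_i` onto the `i`-th coordinate block), the set of
nonzero `(i,j)`-block entries is, for every `(i,j)`, one fixed irreducible group `H`. -/
theorem stmt5 {n r : ℕ} (hr : 1 < r) (G : Set (Mat n)) (hgrp : IsMatGroup G)
    (hirr : IrreducibleSet G)
    (V : Fin r → Submodule ℂ (Fin n → ℂ))
    (hdecomp : DirectSum.IsInternal V)
    (hV : ∀ i, V i ≠ ⊥)
    (hbm : ∀ A ∈ G, ∀ i, ∃ j, ∀ v ∈ V i, A.mulVec v ∈ V j) :
    (∀ i, Module.finrank ℂ (V i) = n / r) ∧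
    ∃ (φ : (Fin n → ℂ) ≃ₗ[ℂ] (Fin r × Fin (n / r) → ℂ))
      (H : Set (Matrix (Fin (n / r)) (Fin (n / r)) ℂ)),
      (∀ i, ∀ v : Fin n → ℂ,
        v ∈ V i ↔ ∀ q : Fin r × Fin (n / r), q.1 ≠ i → φ v q = 0) ∧
      IsMatGroup H ∧ IrreducibleSet H ∧
      ∀ i j : Fin r,
        {B : Matrix (Fin (n / r)) (Fin (n / r)) ℂ | B ≠ 0 ∧ ∃ A ∈ G,
          B = Matrix.of fun x y =>
            LinearMap.toMatrix'
              ((φ.toLinearMap ∘ₗ Matrix.mulVecLin A) ∘ₗ φ.symm.toLinearMap)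
              (i, x) (j, y)} = H := by
  have hind := hdecomp.submodule_iSupIndep
  let i0 : Fin r := ⟨0, by omega⟩
  have htr := aux_trans G hgrp hirr V hind hV hbm
  have hle : ∀ i j, Module.finrank ℂ (V i) ≤ Module.finrank ℂ (V j) := by
    intro i j
    obtain ⟨A, hA, h⟩ := htr i j
    refine LinearMap.finrank_le_finrank_of_injective (f := (Matrix.mulVecLin A).restrict h) ?_
    intro v w hvw
    have h1 := congrArg Subtype.val hvw
    exact Subtype.ext (Matrix.mulVec_injective_iff_isUnit.2 (hgrp.2.2 A hA).1 h1)
  have hsum : r * Module.finrank ℂ (V i0) = n := by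
    have h1 := Module.finrank_eq_card_basis
      (hdecomp.collectedBasis (fun i => Module.finBasis ℂ (V i)))
    simp only [Module.finrank_fin_fun, Fintype.card_sigma, Fintype.card_fin] at h1
    rw [Finset.sum_congr rfl (fun i _ => le_antisymm (hle i i0) (hle i0 i))] at h1
    simpa using h1.symm
  have hfr : ∀ i, Module.finrank ℂ (V i) = n / r := by
    intro i
    rw [le_antisymm (hle i i0) (hle i0 i)]
    exact (Nat.div_eq_of_eq_mul_right (by omega) hsum.symm).symm
  refine ⟨hfr, ?_⟩
  have hd : 0 < n / r := by
    rw [← hfr i0]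
    have := Submodule.nontrivial_iff_ne_bot.2 (hV i0)
    exact Module.finrank_pos
  clear hsum hle
  generalize n / r = d at *
  choose T hT hTm using htr i0
  let b0 : Module.Basis (Fin d) ℂ (V i0) := Module.finBasisOfFinrankEq ℂ (V i0) (hfr i0)
  have hinj : ∀ i, Function.Injective ((Matrix.mulVecLin (T i)).restrict (hTm i)) := by
    intro i v w hvw
    have h1 := congrArg Subtype.val hvw
    exact Subtype.ext (Matrix.mulVec_injective_iff_isUnit.2 (hgrp.2.2 _ (hT i)).1 h1)
  let b : ∀ i, Module.Basis (Fin d) ℂ (V i) := fun i =>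
    b0.map (LinearMap.linearEquivOfInjective _ (hinj i) ((hfr i0).trans (hfr i).symm))
  let β := (hdecomp.collectedBasis b).reindex (Equiv.sigmaEquivProd (Fin r) (Fin d))
  let C : Matrix (Fin n) (Fin d) ℂ := Matrix.of fun k x => (b0 x : Fin n → ℂ) k
  have hC : ∀ w, C *ᵥ w = ∑ x, w x • (b0 x : Fin n → ℂ) := by
    intro w
    funext k
    simp [C, Matrix.mulVec, dotProduct, mul_comm]
  have hβ : ∀ i x, β (i, x) = T i *ᵥ (b0 x : Fin n → ℂ) := by
    intro i x
    simp [β, b]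
  have L1 : ∀ i w q, β.equivFun (T i *ᵥ (C *ᵥ w)) q = if q.1 = i then w q.2 else 0 := by
    intro i w q
    rw [hC, Matrix.mulVec_sum]
    simp only [Matrix.mulVec_smul, ← hβ]
    rcases q with ⟨k, z⟩
    simp only [map_sum, map_smul, Finset.sum_apply, Pi.smul_apply, Module.Basis.equivFun_self,
      Prod.mk.injEq, smul_eq_mul]
    by_cases h : k = i
    · simp [h]
    · simp [h, Ne.symm h]
  have F1 : ∀ i, ∀ v : Fin n → ℂ,
        v ∈ V i ↔ ∀ q : Fin r × Fin d, q.1 ≠ i → β.equivFun v q = 0 := by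
    intro i v
    constructor
    · rintro hv ⟨k, x⟩ hq
      simp only [β, Module.Basis.equivFun_apply, Module.Basis.repr_reindex_apply]
      exact hdecomp.collectedBasis_repr_of_mem_ne b (Ne.symm hq) hv
    · intro h
      rw [← β.sum_equivFun v]
      refine Submodule.sum_mem _ fun q _ => ?_
      by_cases hq : q.1 = i
      · apply Submodule.smul_mem
        rcases q with ⟨k, x⟩
        simp only at hq
        subst hq
        rw [hβ]
        exact hTm _ _ (b0 x).2
      · rw [h q hq, zero_smul]
        exact Submodule.zero_mem _
  obtain ⟨H, h1, h2, h3⟩ := aux_core hd i0 G hgrp hirr V hbm T hT C β.equivFun L1 F1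
  exact ⟨β.equivFun, H, F1, h1, h2, h3⟩
end

section
/- (Clifford's theorem, block-monomial form) Let G ⊆ M_n(ℂ) be an irreducible group and let N be a reducible normal subgroup of G such that there is no similarity under which N = I_m ⊗ N_0 for some irreducible group N_0 ⊆ M_{n/m}(ℂ). Let V_1, …, V_r be the maximal N-invariant subspaces of ℂ^n on each of which all irreducible subrepresentations of N are pairwise isomorphic. Then r > 1, dim V_i = n/r for each i, ℂ^n = V_1 ⊕ … ⊕ V_r, G is block monomial with respect to this decomposition, and after a further simultaneous similarity the set of nonzero (i,j)-block entries of G is, for every pair (i,j), equal to one fixed irreducible group H ⊆ M_{n/r}(ℂ). -/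
open Matrix BigOperators
open scoped Classical

/-- `W` is invariant under every member of `S`. -/
def InvariantUnder {n : ℕ} (S : Set (Mat n)) (W : Submodule ℂ (Fin n → ℂ)) : Prop :=
  ∀ A ∈ S, ∀ v ∈ W, A.mulVec v ∈ W

/-- `U` is an irreducible subrepresentation of `S`. -/
def IsIrredSubrep {n : ℕ} (S : Set (Mat n)) (U : Submodule ℂ (Fin n → ℂ)) : Prop :=
  InvariantUnder S U ∧ U ≠ ⊥ ∧
    ∀ U' : Submodule ℂ (Fin n → ℂ), U' ≤ U → InvariantUnder S U' → U' = ⊥ ∨ U' = U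

/-- The subrepresentations `U` and `U'` of `S` are isomorphic: there is a linear map
that is injective on `U`, carries `U` onto `U'`, and intertwines the action on `U`. -/
def RepIso {n : ℕ} (S : Set (Mat n)) (U U' : Submodule ℂ (Fin n → ℂ)) : Prop :=
  ∃ f : (Fin n → ℂ) →ₗ[ℂ] (Fin n → ℂ),
    Submodule.map f U = U' ∧ Disjoint (LinearMap.ker f) U ∧
    ∀ A ∈ S, ∀ v ∈ U, f (A.mulVec v) = A.mulVec (f v)

/-- `W` is invariant under `S` and all irreducible subrepresentations of `S` on `W`
are pairwise isomorphic. -/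
def IsotypicUnder {n : ℕ} (S : Set (Mat n)) (W : Submodule ℂ (Fin n → ℂ)) : Prop :=
  InvariantUnder S W ∧
    ∀ U U' : Submodule ℂ (Fin n → ℂ), U ≤ W → U' ≤ W →
      IsIrredSubrep S U → IsIrredSubrep S U' → RepIso S U U'

/-- The algebra of endomorphisms generated by `S`. -/
abbrev CliffSA {n : ℕ} (S : Set (Mat n)) : Subalgebra ℂ (Module.End ℂ (Fin n → ℂ)) :=
  Algebra.adjoin ℂ (Set.image Matrix.toLin' S)

/-- The algebra of endomorphisms generated by `S`, as a type. -/
def CliffAlg {n : ℕ} (S : Set (Mat n)) : Type := ↥(CliffSA S)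

noncomputable instance {n : ℕ} (S : Set (Mat n)) : Ring (CliffAlg S) :=
  inferInstanceAs (Ring ↥(CliffSA S))

noncomputable instance {n : ℕ} (S : Set (Mat n)) : Algebra ℂ (CliffAlg S) :=
  inferInstanceAs (Algebra ℂ ↥(CliffSA S))

noncomputable instance {n : ℕ} (S : Set (Mat n)) : Module (CliffAlg S) (Fin n → ℂ) where
  smul a v := a.1 v
  one_smul _ := rfl
  mul_smul _ _ _ := rfl
  smul_zero a := map_zero a.1
  smul_add a x y := map_add a.1 x y
  add_smul _ _ _ := rfl
  zero_smul _ := rfl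

instance {n : ℕ} (S : Set (Mat n)) : IsScalarTower ℂ (CliffAlg S) (Fin n → ℂ) where
  smul_assoc _ _ _ := rfl

theorem cliff_inv {n : ℕ} {S : Set (Mat n)} {W : Submodule ℂ (Fin n → ℂ)}
    (h : InvariantUnder S W) (a : Module.End ℂ (Fin n → ℂ)) (ha : a ∈ CliffSA S) :
    ∀ v ∈ W, a v ∈ W := by
  induction ha using Algebra.adjoin_induction with
  | mem x hx =>
    obtain ⟨A, hA, rfl⟩ := hx
    intro v hv
    simpa using h A hA v hv
  | algebraMap c =>
    intro v hv
    simpa [Module.algebraMap_end_apply] using W.smul_mem c hv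
  | add x y _ _ hx hy => intro v hv; exact W.add_mem (hx v hv) (hy v hv)
  | mul x y _ _ hx hy => intro v hv; exact hx _ (hy v hv)

/-- An invariant subspace as a submodule over the generated algebra. -/
def cliffSub {n : ℕ} {S : Set (Mat n)} {W : Submodule ℂ (Fin n → ℂ)}
    (h : InvariantUnder S W) : Submodule (CliffAlg S) (Fin n → ℂ) where
  carrier := W
  add_mem' := W.add_mem
  zero_mem' := W.zero_mem
  smul_mem' := fun a v hv => cliff_inv h a.1 a.2 v hv

theorem mem_cliffSub {n : ℕ} {S : Set (Mat n)} {W : Submodule ℂ (Fin n → ℂ)}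
    (h : InvariantUnder S W) (v : Fin n → ℂ) : v ∈ cliffSub h ↔ v ∈ W := Iff.rfl

/-- A member of `S` as a member of the generated algebra. -/
def cliffGen {n : ℕ} {S : Set (Mat n)} (A : Mat n) (hA : A ∈ S) : CliffAlg S :=
  ⟨Matrix.toLin' A, Algebra.subset_adjoin ⟨A, hA, rfl⟩⟩

theorem cliffGen_smul {n : ℕ} {S : Set (Mat n)} (A : Mat n) (hA : A ∈ S) (v : Fin n → ℂ) :
    cliffGen A hA • v = A.mulVec v := by
  change Matrix.toLin' A v = _
  simp

theorem cliff_res_inv {n : ℕ} {S : Set (Mat n)} (P : Submodule (CliffAlg S) (Fin n → ℂ)) :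
    InvariantUnder S (P.restrictScalars ℂ) := by
  intro A hA v hv
  rw [← cliffGen_smul A hA]
  exact P.smul_mem _ hv

theorem cliffSub_res {n : ℕ} {S : Set (Mat n)} (P : Submodule (CliffAlg S) (Fin n → ℂ)) :
    cliffSub (cliff_res_inv P) = P := by
  ext v; rfl

theorem cliffSub_le {n : ℕ} {S : Set (Mat n)} {W W' : Submodule ℂ (Fin n → ℂ)}
    (h : InvariantUnder S W) (h' : InvariantUnder S W') :
    cliffSub h ≤ cliffSub h' ↔ W ≤ W' := Iff.rfl

theorem cliffSub_eq_bot {n : ℕ} {S : Set (Mat n)} {W : Submodule ℂ (Fin n → ℂ)}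
    (h : InvariantUnder S W) : cliffSub h = ⊥ ↔ W = ⊥ := by
  rw [Submodule.eq_bot_iff, Submodule.eq_bot_iff]; rfl

theorem cliff_simple {n : ℕ} {S : Set (Mat n)} {U : Submodule ℂ (Fin n → ℂ)}
    (h : InvariantUnder S U) :
    IsSimpleModule (CliffAlg S) (cliffSub h) ↔ IsIrredSubrep S U := by
  rw [isSimpleModule_iff_isAtom]
  constructor
  · intro ha
    refine ⟨h, fun h0 => ha.1 ((cliffSub_eq_bot h).2 h0), fun U' hU' hi => ?_⟩
    rcases ha.le_iff.1 ((cliffSub_le hi h).2 hU') with h1 | h1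
    · exact Or.inl ((cliffSub_eq_bot hi).1 h1)
    · right
      exact le_antisymm hU' ((cliffSub_le h hi).1 h1.ge)
  · rintro ⟨_, h0, hU⟩
    refine ⟨fun hb => h0 ((cliffSub_eq_bot h).1 hb), fun P hP => ?_⟩
    have hPU : P.restrictScalars ℂ ≤ U := fun v hv => hP.le hv
    rcases hU _ hPU (cliff_res_inv P) with h1 | h1
    · rw [← cliffSub_res P]
      exact (cliffSub_eq_bot _).2 h1
    · exfalso
      refine hP.not_ge fun v hv => ?_
      have : v ∈ P.restrictScalars ℂ := by rw [h1]; exact hv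
      exact this

theorem cliff_iso {n : ℕ} {S : Set (Mat n)} {U U' : Submodule ℂ (Fin n → ℂ)}
    (h : InvariantUnder S U) (h' : InvariantUnder S U') :
    Nonempty (cliffSub h ≃ₗ[CliffAlg S] cliffSub h') ↔ RepIso S U U' := by
  constructor
  · rintro ⟨e⟩
    let f0 : U →ₗ[ℂ] (Fin n → ℂ) :=
      { toFun := fun u => (e ⟨u.1, u.2⟩ : Fin n → ℂ)
        map_add' := by
          intro x y
          rw [← Submodule.coe_add, ← map_add]; rfl
        map_smul' := by
          intro c x
          have := e.map_smul (algebraMap ℂ (CliffAlg S) c) ⟨x.1, x.2⟩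
          have := congrArg (Subtype.val) this
          exact this }
    obtain ⟨f, hf⟩ := LinearMap.exists_extend f0
    have hf' : ∀ u (hu : u ∈ U), f u = (e ⟨u, hu⟩ : Fin n → ℂ) := fun u hu =>
      LinearMap.congr_fun hf ⟨u, hu⟩
    refine ⟨f, ?_, ?_, ?_⟩
    · ext v
      constructor
      · rintro ⟨u, hu, rfl⟩
        rw [hf' u hu]
        exact (e ⟨u, hu⟩).2
      · intro hv
        refine ⟨(e.symm ⟨v, hv⟩ : Fin n → ℂ), (e.symm ⟨v, hv⟩).2, ?_⟩
        rw [hf' _ (e.symm ⟨v, hv⟩).2]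
        have : e (e.symm ⟨v, hv⟩) = ⟨v, hv⟩ := e.apply_symm_apply _
        exact congrArg Subtype.val this
    · rw [Submodule.disjoint_def]
      intro u hk hu
      rw [LinearMap.mem_ker, hf' u hu] at hk
      have h1 : e ⟨u, hu⟩ = 0 := Subtype.ext hk
      have h2 := (LinearEquiv.map_eq_zero_iff e).1 h1
      exact congrArg Subtype.val h2
    · intro A hA v hv
      rw [hf' v hv, hf' _ (h A hA v hv)]
      have h1 := congrArg Subtype.val (e.map_smul (cliffGen A hA) ⟨v, hv⟩)
      have h2 : cliffGen A hA • (⟨v, hv⟩ : cliffSub h) = ⟨A.mulVec v, h A hA v hv⟩ :=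
        Subtype.ext (cliffGen_smul A hA v)
      rw [h2] at h1
      exact h1.trans (cliffGen_smul A hA _)
  · rintro ⟨f, hm, hd, hc⟩
    have hmem : ∀ u ∈ U, f u ∈ U' := fun u hu => hm ▸ ⟨u, hu, rfl⟩
    have hcomm : ∀ a ∈ CliffSA S, ∀ u ∈ U, f (a u) = a (f u) := by
      intro a ha
      induction ha using Algebra.adjoin_induction with
      | mem x hx =>
        obtain ⟨A, hA, rfl⟩ := hx
        intro v hv
        simpa using hc A hA v hv
      | algebraMap c =>
        intro v hv
        simp [Module.algebraMap_end_apply]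
      | add x y _ _ hx hy => intro v hv; simp [hx v hv, hy v hv]
      | mul x y _ hy' hx hy =>
        intro v hv
        simp [hx _ (cliff_inv h y hy' v hv), hy v hv]
    let F : cliffSub h →ₗ[CliffAlg S] cliffSub h' :=
      { toFun := fun u => ⟨f u.1, hmem u.1 u.2⟩
        map_add' := by
          intro x y
          exact Subtype.ext (map_add f _ _)
        map_smul' := by
          intro a x
          exact Subtype.ext (hcomm a.1 a.2 x.1 x.2) }
    refine ⟨LinearEquiv.ofBijective F ⟨?_, ?_⟩⟩
    · rw [injective_iff_map_eq_zero]
      intro u hu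
      have h1 : f u.1 = 0 := congrArg Subtype.val hu
      exact Subtype.ext ((Submodule.disjoint_def.1 hd) u.1 h1 u.2)
    · rintro ⟨v, hv⟩
      have : v ∈ Submodule.map f U := by rw [hm]; exact hv
      obtain ⟨u, hu, rfl⟩ := this
      exact ⟨⟨u, hu⟩, rfl⟩

theorem cliff_isotypic {n : ℕ} {S : Set (Mat n)} {W : Submodule ℂ (Fin n → ℂ)}
    (h : InvariantUnder S W) :
    IsIsotypic (CliffAlg S) (cliffSub h) ↔ IsotypicUnder S W := by
  rw [isIsotypic_submodule_iff]
  constructor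
  · intro hh
    refine ⟨h, fun U U' hU hU' hi hi' => ?_⟩
    have := (cliff_simple hi.1).2 hi
    have := (cliff_simple hi'.1).2 hi'
    have h1 := hh (cliffSub hi'.1) ((cliffSub_le _ _).2 hU')
    rw [isIsotypicOfType_submodule_iff] at h1
    exact (cliff_iso hi.1 hi'.1).1 (h1 (cliffSub hi.1) ((cliffSub_le _ _).2 hU))
  · rintro ⟨_, hh⟩ P hP hPs
    rw [isIsotypicOfType_submodule_iff]
    intro Q hQ hQs
    rw [← cliffSub_res P] at hPs ⊢
    rw [← cliffSub_res Q] at hQs ⊢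
    exact (cliff_iso _ _).2 (hh _ _ (fun v hv => hQ hv) (fun v hv => hP hv)
      ((cliff_simple _).1 hQs) ((cliff_simple _).1 hPs))

theorem cliff_exists_irred {n : ℕ} {S : Set (Mat n)} (hn : 0 < n) :
    ∃ U, IsIrredSubrep S U := by
  have : Nonempty (Fin n) := ⟨⟨0, hn⟩⟩
  have : IsArtinian (CliffAlg S) (Fin n → ℂ) :=
    isArtinian_of_tower ℂ inferInstance
  obtain ⟨P, hP⟩ := IsAtomic.exists_atom (Submodule (CliffAlg S) (Fin n → ℂ))
  rw [← isSimpleModule_iff_isAtom, ← cliffSub_res P] at hP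
  exact ⟨_, (cliff_simple _).1 hP⟩

theorem cliff_semisimple {n : ℕ} {S : Set (Mat n)}
    (hs : sSup {U | IsIrredSubrep S U} = ⊤) :
    IsSemisimpleModule (CliffAlg S) (Fin n → ℂ) := by
  rw [← sSup_simples_eq_top_iff_isSemisimpleModule]
  rw [← cliffSub_res (sSup _), eq_top_iff]
  intro v _
  rw [mem_cliffSub]
  refine (?_ : sSup {U | IsIrredSubrep S U} ≤ _) (hs.ge (Submodule.mem_top : v ∈ ⊤))
  refine sSup_le fun U hU u hu => ?_
  have := (cliff_simple hU.1).2 hU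
  exact (le_sSup (a := cliffSub hU.1) this) hu

/-- `W` is a maximal isotypic subspace. -/
def CliffMax {n : ℕ} (S : Set (Mat n)) (W : Submodule ℂ (Fin n → ℂ)) : Prop :=
  IsotypicUnder S W ∧ ∀ W', IsotypicUnder S W' → W ≤ W' → W = W'

theorem cliff_comp_max {n : ℕ} {S : Set (Mat n)}
    [IsSemisimpleModule (CliffAlg S) (Fin n → ℂ)]
    (P : Submodule (CliffAlg S) (Fin n → ℂ))
    (hP : P ∈ isotypicComponents (CliffAlg S) (Fin n → ℂ)) :
    CliffMax S (P.restrictScalars ℂ) := by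
  refine ⟨(cliff_isotypic (cliff_res_inv P)).1 ?_, fun W' hW' hle => le_antisymm hle ?_⟩
  · rw [cliffSub_res]
    exact IsIsotypic.isotypicComponents hP
  · obtain ⟨Q, hQ, rfl⟩ := hP
    have hi := (cliff_isotypic hW'.1).2 hW'
    rw [isIsotypic_submodule_iff] at hi
    have h1 := hi Q (fun v hv => hle (Q.le_isotypicComponent hv))
    exact le_isotypicComponent_iff.2 h1

theorem cliff_max_comp {n : ℕ} {S : Set (Mat n)} (hn : 0 < n)
    [IsSemisimpleModule (CliffAlg S) (Fin n → ℂ)]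
    {W : Submodule ℂ (Fin n → ℂ)} (hW : CliffMax S W) :
    cliffSub hW.1.1 ∈ isotypicComponents (CliffAlg S) (Fin n → ℂ) := by
  have hne : cliffSub hW.1.1 ≠ ⊥ := by
    intro h0
    have h0' := (cliffSub_eq_bot _).1 h0
    obtain ⟨U, hU⟩ := cliff_exists_irred (S := S) hn
    have := (cliff_simple hU.1).2 hU
    have hc := cliff_comp_max (isotypicComponent (CliffAlg S) (Fin n → ℂ) (cliffSub hU.1))
      ⟨_, this, rfl⟩
    have h1 := hW.2 _ hc.1 (by rw [h0']; exact bot_le)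
    apply hU.2.1
    rw [eq_bot_iff, ← h0', h1]
    exact fun v hv => (cliffSub hU.1).le_isotypicComponent hv
  obtain ⟨Q, hQ, hQs⟩ := (IsSemisimpleModule.eq_bot_or_exists_simple_le _).resolve_left hne
  refine ⟨Q, hQs, ?_⟩
  have hi := (cliff_isotypic hW.1.1).2 hW.1
  rw [isIsotypic_submodule_iff] at hi
  have h1 := le_isotypicComponent_iff.2 (hi Q hQ)
  have hc := cliff_comp_max (isotypicComponent (CliffAlg S) (Fin n → ℂ) Q) ⟨_, hQs, rfl⟩
  have h2 := hW.2 _ hc.1 h1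
  refine le_antisymm h1 fun v hv => ?_
  have : v ∈ W := by rw [h2]; exact hv
  exact this

theorem cliff_decomp {n r : ℕ} {S : Set (Mat n)} (hn : 0 < n)
    (hs : sSup {U | IsIrredSubrep S U} = ⊤)
    (V : Fin r → Submodule ℂ (Fin n → ℂ)) (hVinj : Function.Injective V)
    (hV : Set.range V = {W | CliffMax S W}) :
    iSupIndep V ∧ iSup V = ⊤ ∧ ∀ i, V i ≠ ⊥ := by
  have := cliff_semisimple hs
  have hm : ∀ i, CliffMax S (V i) := fun i => by
    have : V i ∈ Set.range V := ⟨i, rfl⟩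
    rwa [hV] at this
  let P : Fin r → Submodule (CliffAlg S) (Fin n → ℂ) := fun i => cliffSub (hm i).1.1
  have hP : ∀ i, P i ∈ isotypicComponents (CliffAlg S) (Fin n → ℂ) := fun i =>
    cliff_max_comp hn (hm i)
  refine ⟨?_, ?_, ?_⟩
  · have h1 := (sSupIndep_iff _).1 (sSupIndep_isotypicComponents (CliffAlg S) (Fin n → ℂ))
    have h2 : iSupIndep P := by
      refine h1.comp (f := fun i => ⟨P i, hP i⟩) ?_
      intro i j hij
      have : P i = P j := congrArg Subtype.val hij
      apply hVinj
      ext v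
      exact (SetLike.ext_iff.1 this v)
    rw [iSupIndep_iff_finsetSum_eq_zero_imp_eq_zero] at h2 ⊢
    exact h2
  · rw [eq_top_iff]
    intro v _
    have h1 := sSup_isotypicComponents (CliffAlg S) (Fin n → ℂ)
    have h2 : v ∈ (sSup (isotypicComponents (CliffAlg S) (Fin n → ℂ))).restrictScalars ℂ := by
      rw [h1]; trivial
    rw [Submodule.restrictScalars_sSup] at h2
    refine (sSup_le ?_ : _ ≤ iSup V) h2
    rintro _ ⟨Q, hQ, rfl⟩
    have : Q.restrictScalars ℂ ∈ Set.range V := by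
      rw [hV]; exact cliff_comp_max Q hQ
    obtain ⟨i, hi⟩ := this
    change Q.restrictScalars ℂ ≤ _
    rw [← hi]
    exact le_iSup V i
  · intro i h0
    exact (bot_lt_isotypicComponents (hP i)).ne' ((cliffSub_eq_bot _).2 h0)

theorem cliff_exB {n d : ℕ} (β : (Fin d → ℂ) →ₗ[ℂ] (Fin n → ℂ)) (hβ : Function.Injective β)
    (A : Mat n) (hA : ∀ v ∈ LinearMap.range β, A.mulVec v ∈ LinearMap.range β) :
    ∃ B : Mat d, ∀ c, A.mulVec (β c) = β (B.mulVec c) := by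
  let e := LinearEquiv.ofInjective β hβ
  let F : (Fin d → ℂ) →ₗ[ℂ] LinearMap.range β :=
    ((Matrix.mulVecLin A) ∘ₗ β).codRestrict (LinearMap.range β)
      (fun c => hA _ (LinearMap.mem_range_self β c))
  refine ⟨LinearMap.toMatrix' (e.symm.toLinearMap ∘ₗ F), fun c => ?_⟩
  rw [LinearMap.toMatrix'_mulVec]
  have h1 : e (e.symm (F c)) = F c := e.apply_symm_apply _
  exact (congrArg Subtype.val h1).symm

theorem cliff_kron_mulVec {m s n : ℕ} (h : m * s = n) (B : Mat s) (f : Fin m × Fin s → ℂ) :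
    (Matrix.reindex (finCongr h) (finCongr h) (kron (1 : Mat m) B)).mulVec
      (fun p => f (finProdFinEquiv.symm ((finCongr h).symm p))) =
      fun p => B.mulVec (fun x => f ((finProdFinEquiv.symm ((finCongr h).symm p)).1, x))
        (finProdFinEquiv.symm ((finCongr h).symm p)).2 := by
  subst h
  ext p
  simp only [Matrix.mulVec, dotProduct, kron]
  rw [← finProdFinEquiv.sum_comp, Fintype.sum_prod_type]
  simp [Matrix.one_apply]

theorem cliff_tensor {n : ℕ} (hn : 0 < n) (N : Set (Mat n))
    (hs : sSup {U | IsIrredSubrep N U} = ⊤) (ht : IsotypicUnder N ⊤) :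
    ∃ (m s : ℕ) (h : m * s = n) (N0 : Set (Mat s)) (T : Mat n),
      IrreducibleSet N0 ∧ IsUnit T ∧
      (fun A => T⁻¹ * A * T) '' N =
        (fun B => Matrix.reindex (finCongr h) (finCongr h) (kron (1 : Mat m) B)) '' N0 := by
  have := cliff_semisimple hs
  have : Nonempty (Fin n) := ⟨⟨0, hn⟩⟩
  have : Module.Finite (CliffAlg N) (Fin n → ℂ) := Module.Finite.of_restrictScalars_finite ℂ _ _
  have hiso : IsIsotypic (CliffAlg N) (Fin n → ℂ) := by
    have h1 := (cliff_isotypic ht.1).2 ht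
    have h2 : cliffSub ht.1 = ⊤ := by ext v; simp [mem_cliffSub]
    rw [h2] at h1
    exact (Submodule.topEquiv.isIsotypic_iff).1 h1
  obtain ⟨m, _, Q, hQ, ⟨η⟩⟩ := hiso.linearEquiv_fun
  rw [← cliffSub_res Q] at hQ
  have hU := (cliff_simple _).1 hQ
  let U := Q.restrictScalars ℂ
  let s := Module.finrank ℂ U
  let b : Module.Basis (Fin s) ℂ U := Module.finBasis ℂ U
  let β : (Fin s → ℂ) →ₗ[ℂ] (Fin n → ℂ) := U.subtype ∘ₗ b.equivFun.symm.toLinearMap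
  have hβ : Function.Injective β := U.subtype_injective.comp b.equivFun.symm.injective
  have hβr : LinearMap.range β = U := by
    rw [LinearMap.range_comp, LinearEquiv.range, Submodule.map_top, Submodule.range_subtype]
  let ηC : (Fin n → ℂ) ≃ₗ[ℂ] (Fin m → U) :=
    { toFun := fun v k => ⟨(η v k : Fin n → ℂ), (η v k).2⟩
      invFun := fun f => η.symm fun k => ⟨(f k : Fin n → ℂ), (f k).2⟩
      left_inv := fun v => η.symm_apply_apply v
      right_inv := fun f => by
        have h1 := η.apply_symm_apply fun k => (⟨(f k : Fin n → ℂ), (f k).2⟩ : Q)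
        funext k
        exact Subtype.ext (congrArg Subtype.val (congrFun h1 k))
      map_add' := fun x y => by
        funext k
        exact Subtype.ext (congrArg Subtype.val (congrFun (η.map_add x y) k))
      map_smul' := fun c x => by
        funext k
        have h1 := η.map_smul (algebraMap ℂ (CliffAlg N) c) x
        exact Subtype.ext (congrArg Subtype.val (congrFun h1 k)) }
  have hηC : ∀ A ∈ N, ∀ v k, (ηC (A.mulVec v) k : Fin n → ℂ) = A.mulVec (ηC v k) := by
    intro A hA v k
    have h1 := η.map_smul (cliffGen A hA) v
    have h2 := congrArg Subtype.val (congrFun h1 k)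
    have h3 : cliffGen A hA • v = A.mulVec v := cliffGen_smul A hA v
    rw [h3] at h2
    exact h2.trans (cliffGen_smul A hA _)
  let e : (Fin n → ℂ) ≃ₗ[ℂ] (Fin m × Fin s → ℂ) :=
    (ηC.trans (LinearEquiv.piCongrRight fun _ => b.equivFun)).trans
      (LinearEquiv.curry ℂ ℂ (Fin m) (Fin s)).symm
  have he : ∀ v k, β (fun x => e v (k, x)) = (ηC v k : Fin n → ℂ) := by
    intro v k
    have h1 : b.equivFun.symm (b.equivFun (ηC v k)) = ηC v k := b.equivFun.symm_apply_apply _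
    exact congrArg Subtype.val h1
  have hms : m * s = n := by
    have := e.finrank_eq
    simpa using this.symm
  let τ : Fin m × Fin s ≃ Fin n := finProdFinEquiv.trans (finCongr hms)
  let θ : (Fin n → ℂ) ≃ₗ[ℂ] (Fin n → ℂ) := e.trans (LinearEquiv.funCongrLeft ℂ ℂ τ.symm)
  have hθ : ∀ v, θ v = fun p => e v (finProdFinEquiv.symm ((finCongr hms).symm p)) := fun v => rfl
  let T : Mat n := LinearMap.toMatrix' θ.symm.toLinearMap
  let T' : Mat n := LinearMap.toMatrix' θ.toLinearMap
  have hTT' : T * T' = 1 := by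
    rw [← LinearMap.toMatrix'_comp]; simp
  have hT'T : T' * T = 1 := by
    rw [← LinearMap.toMatrix'_comp]; simp
  have hTinv : T⁻¹ = T' := Matrix.inv_eq_left_inv hT'T
  have hTu : IsUnit T := ⟨⟨T, T', hTT', hT'T⟩, rfl⟩
  have key : ∀ A ∈ N, ∀ B : Mat s, (∀ c, A.mulVec (β c) = β (B.mulVec c)) →
      T⁻¹ * A * T = Matrix.reindex (finCongr hms) (finCongr hms) (kron (1 : Mat m) B) := by
    intro A hA B hB
    have h1 : T' * A = Matrix.reindex (finCongr hms) (finCongr hms) (kron (1 : Mat m) B) * T' := by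
      refine Matrix.ext_of_mulVec_single fun i => ?_
      generalize (Pi.single i 1 : Fin n → ℂ) = v
      rw [← Matrix.mulVec_mulVec, ← Matrix.mulVec_mulVec, LinearMap.toMatrix'_mulVec,
        LinearMap.toMatrix'_mulVec]
      change θ (A.mulVec v) = _ *ᵥ (θ v)
      rw [hθ v, cliff_kron_mulVec, hθ]
      have h2 : ∀ k, (fun x => e (A.mulVec v) (k, x)) = B.mulVec (fun x => e v (k, x)) := by
        intro k
        apply hβ
        rw [he, hηC A hA, ← hB, he]
      funext p
      rw [← h2]
    rw [hTinv, h1, mul_assoc, hT'T, mul_one]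
  have hex : ∀ A ∈ N, ∃ B : Mat s, ∀ c, A.mulVec (β c) = β (B.mulVec c) := by
    intro A hA
    apply cliff_exB β hβ
    rw [hβr]
    exact hU.1 A hA
  refine ⟨m, s, hms, {B | ∃ A ∈ N, ∀ c, A.mulVec (β c) = β (B.mulVec c)}, T, ?_, hTu, ?_⟩
  · intro W hW
    have hle : W.map β ≤ U := by rw [← hβr]; exact LinearMap.map_le_range
    have hinv : InvariantUnder N (W.map β) := by
      rintro A hA _ ⟨w, hw, rfl⟩
      obtain ⟨B, hB⟩ := hex A hA
      rw [hB]
      exact ⟨_, hW B ⟨A, hA, hB⟩ w hw, rfl⟩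
    rcases hU.2.2 _ hle hinv with h1 | h1
    · left
      rw [eq_bot_iff]
      intro w hw
      have h2 : β w ∈ W.map β := ⟨w, hw, rfl⟩
      rw [h1, Submodule.mem_bot] at h2
      exact hβ (by rw [h2]; simp)
    · right
      rw [eq_top_iff]
      intro w _
      have h2 : β w ∈ W.map β := by
        rw [h1]
        change β w ∈ U
        rw [← hβr]
        exact LinearMap.mem_range_self β w
      obtain ⟨w', hw', h3⟩ := h2
      rwa [← hβ h3]
  · ext X
    constructor
    · rintro ⟨A, hA, rfl⟩
      obtain ⟨B, hB⟩ := hex A hA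
      exact ⟨B, ⟨A, hA, hB⟩, (key A hA B hB).symm⟩
    · rintro ⟨B, ⟨A, hA, hB⟩, rfl⟩
      exact ⟨A, hA, key A hA B hB⟩

/-- `g` is invertible and normalizes `N`. -/
def CliffNorm {n : ℕ} (N : Set (Mat n)) (g : Mat n) : Prop :=
  IsUnit g ∧ (∀ A ∈ N, g⁻¹ * A * g ∈ N) ∧ ∀ A ∈ N, g * A * g⁻¹ ∈ N

theorem CliffNorm.det {n : ℕ} {N : Set (Mat n)} {g : Mat n} (hg : CliffNorm N g) :
    IsUnit g.det := (Matrix.isUnit_iff_isUnit_det g).1 hg.1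

theorem CliffNorm.inv {n : ℕ} {N : Set (Mat n)} {g : Mat n} (hg : CliffNorm N g) :
    CliffNorm N g⁻¹ := by
  have h : g⁻¹⁻¹ = g := Matrix.nonsing_inv_nonsing_inv g hg.det
  refine ⟨(Matrix.isUnit_nonsing_inv_iff).2 hg.1, ?_, ?_⟩
  · rw [h]; exact hg.2.2
  · rw [h]; exact hg.2.1

theorem cliff_inv_mulVec {n : ℕ} {g : Mat n} (hg : IsUnit g) (v : Fin n → ℂ) :
    g⁻¹.mulVec (g.mulVec v) = v := by
  rw [Matrix.mulVec_mulVec, Matrix.nonsing_inv_mul _ ((Matrix.isUnit_iff_isUnit_det g).1 hg),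
    Matrix.one_mulVec]

theorem cliff_mulVec_inv {n : ℕ} {g : Mat n} (hg : IsUnit g) (v : Fin n → ℂ) :
    g.mulVec (g⁻¹.mulVec v) = v := by
  rw [Matrix.mulVec_mulVec, Matrix.mul_nonsing_inv _ ((Matrix.isUnit_iff_isUnit_det g).1 hg),
    Matrix.one_mulVec]

theorem cliff_map_inv {n : ℕ} {g : Mat n} (hg : IsUnit g) (U : Submodule ℂ (Fin n → ℂ)) :
    (U.map (Matrix.mulVecLin g)).map (Matrix.mulVecLin g⁻¹) = U := by
  rw [← Submodule.map_comp]
  have h : Matrix.mulVecLin g⁻¹ ∘ₗ Matrix.mulVecLin g = LinearMap.id :=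
    LinearMap.ext fun v => cliff_inv_mulVec hg v
  rw [h, Submodule.map_id]

theorem CliffNorm.map_inv' {n : ℕ} {N : Set (Mat n)} {g : Mat n} (hg : CliffNorm N g)
    (U : Submodule ℂ (Fin n → ℂ)) :
    (U.map (Matrix.mulVecLin g⁻¹)).map (Matrix.mulVecLin g) = U := by
  have := cliff_map_inv hg.inv.1 U
  rwa [Matrix.nonsing_inv_nonsing_inv g hg.det] at this

theorem CliffNorm.invariant {n : ℕ} {N : Set (Mat n)} {g : Mat n} (hg : CliffNorm N g)
    {U : Submodule ℂ (Fin n → ℂ)} (hU : InvariantUnder N U) :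
    InvariantUnder N (U.map (Matrix.mulVecLin g)) := by
  rintro A hA _ ⟨u, hu, rfl⟩
  refine ⟨_, hU _ (hg.2.1 A hA) u hu, ?_⟩
  simp only [Matrix.mulVecLin_apply, Matrix.mulVec_mulVec]
  rw [← mul_assoc, ← mul_assoc, Matrix.mul_nonsing_inv _ hg.det, one_mul]

theorem CliffNorm.map_le {n : ℕ} {N : Set (Mat n)} {g : Mat n} (hg : CliffNorm N g)
    {U U' : Submodule ℂ (Fin n → ℂ)} (h : U' ≤ U.map (Matrix.mulVecLin g)) :
    U'.map (Matrix.mulVecLin g⁻¹) ≤ U := by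
  have := Submodule.map_mono (f := Matrix.mulVecLin g⁻¹) h
  rwa [cliff_map_inv hg.1] at this

theorem CliffNorm.irred {n : ℕ} {N : Set (Mat n)} {g : Mat n} (hg : CliffNorm N g)
    {U : Submodule ℂ (Fin n → ℂ)} (hU : IsIrredSubrep N U) :
    IsIrredSubrep N (U.map (Matrix.mulVecLin g)) := by
  refine ⟨hg.invariant hU.1, fun h0 => hU.2.1 ?_, fun U' hU' hi => ?_⟩
  · rw [← cliff_map_inv hg.1 U, h0, Submodule.map_bot]
  · rw [← hg.map_inv' U']
    rcases hU.2.2 _ (hg.map_le hU') (hg.inv.invariant hi) with h | h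
    · left; rw [h, Submodule.map_bot]
    · right; rw [h]

theorem CliffNorm.iso {n : ℕ} {N : Set (Mat n)} {g : Mat n} (hg : CliffNorm N g)
    {U U' : Submodule ℂ (Fin n → ℂ)} (h : RepIso N U U') :
    RepIso N (U.map (Matrix.mulVecLin g)) (U'.map (Matrix.mulVecLin g)) := by
  obtain ⟨f, hm, hd, hc⟩ := h
  refine ⟨(Matrix.mulVecLin g ∘ₗ f) ∘ₗ Matrix.mulVecLin g⁻¹, ?_, ?_, ?_⟩
  · rw [Submodule.map_comp, cliff_map_inv hg.1, Submodule.map_comp, hm]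
  · rw [Submodule.disjoint_def] at hd ⊢
    rintro _ hk ⟨u, hu, rfl⟩
    simp only [LinearMap.mem_ker, LinearMap.comp_apply, Matrix.mulVecLin_apply,
      cliff_inv_mulVec hg.1] at hk
    have h1 := cliff_inv_mulVec hg.1 (f u)
    rw [hk, Matrix.mulVec_zero] at h1
    rw [hd u h1.symm hu, map_zero]
  · rintro A hA _ ⟨u, hu, rfl⟩
    simp only [LinearMap.comp_apply, Matrix.mulVecLin_apply, cliff_inv_mulVec hg.1]
    have h1 := hc _ (hg.2.1 A hA) u hu
    have h2 : g⁻¹ *ᵥ A *ᵥ g *ᵥ u = (g⁻¹ * A * g) *ᵥ u := by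
      simp only [Matrix.mulVec_mulVec, mul_assoc]
    rw [h2, h1]
    simp only [Matrix.mulVec_mulVec]
    rw [← mul_assoc, ← mul_assoc, Matrix.mul_nonsing_inv _ hg.det, one_mul]

theorem CliffNorm.isotypic {n : ℕ} {N : Set (Mat n)} {g : Mat n} (hg : CliffNorm N g)
    {W : Submodule ℂ (Fin n → ℂ)} (h : IsotypicUnder N W) :
    IsotypicUnder N (W.map (Matrix.mulVecLin g)) := by
  refine ⟨hg.invariant h.1, fun U U' hU hU' hi hi' => ?_⟩
  have := hg.iso (h.2 _ _ (hg.map_le hU) (hg.map_le hU') (hg.inv.irred hi) (hg.inv.irred hi'))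
  rwa [hg.map_inv', hg.map_inv'] at this

theorem CliffNorm.max {n : ℕ} {N : Set (Mat n)} {g : Mat n} (hg : CliffNorm N g)
    {W : Submodule ℂ (Fin n → ℂ)} (h : CliffMax N W) :
    CliffMax N (W.map (Matrix.mulVecLin g)) := by
  refine ⟨hg.isotypic h.1, fun W' hW' hle => ?_⟩
  have h1 := Submodule.map_mono (f := Matrix.mulVecLin g⁻¹) hle
  rw [cliff_map_inv hg.1] at h1
  have h2 := h.2 _ (hg.inv.isotypic hW') h1
  rw [h2, hg.map_inv']

theorem cliff_trans {n r : ℕ} {G : Set (Mat n)} (hG : IsMatGroup G) (hGirr : IrreducibleSet G)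
    (V : Fin r → Submodule ℂ (Fin n → ℂ)) (hind : iSupIndep V) (hne : ∀ i, V i ≠ ⊥)
    (hperm : ∀ g ∈ G, ∀ i, ∃ j, (V i).map (Matrix.mulVecLin g) = V j) (i0 k : Fin r) :
    ∃ g ∈ G, (V i0).map (Matrix.mulVecLin g) = V k := by
  by_contra hk
  let W : Submodule ℂ (Fin n → ℂ) := ⨆ g : G, (V i0).map (Matrix.mulVecLin g.1)
  have hle : ∀ g ∈ G, (V i0).map (Matrix.mulVecLin g) ≤ W := fun g hg =>
    le_iSup (fun g : G => (V i0).map (Matrix.mulVecLin g.1)) ⟨g, hg⟩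
  have hW : ∀ A ∈ G, ∀ v ∈ W, A.mulVec v ∈ W := by
    intro A hA
    suffices h : W ≤ W.comap (Matrix.mulVecLin A) from fun v hv => h hv
    refine iSup_le fun g => ?_
    rintro _ ⟨v, hv, rfl⟩
    refine hle (A * g.1) (hG.2.1 A hA _ g.2) ⟨v, hv, ?_⟩
    simp [Matrix.mulVec_mulVec]
  have hW0 : V i0 ≤ W := by
    have := hle 1 hG.1
    rwa [Matrix.mulVecLin_one, Submodule.map_id] at this
  rcases hGirr W hW with h | h
  · exact hne i0 (by rw [eq_bot_iff, ← h]; exact hW0)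
  · have h1 : W ≤ ⨆ (j) (_ : j ≠ k), V j := by
      refine iSup_le fun g => ?_
      obtain ⟨j, hj⟩ := hperm g.1 g.2 i0
      rw [hj]
      refine le_iSup₂_of_le j ?_ le_rfl
      rintro rfl
      exact hk ⟨g.1, g.2, hj⟩
    have h2 := hind k
    rw [h] at h1
    rw [top_le_iff.1 h1, disjoint_top] at h2
    exact hne k h2

theorem cliff_blocks {n r : ℕ} {G : Set (Mat n)} (hG : IsMatGroup G) (hGirr : IrreducibleSet G)
    (hr : 0 < r)
    (V : Fin r → Submodule ℂ (Fin n → ℂ)) (hind : iSupIndep V) (htop : iSup V = ⊤)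
    (hne : ∀ i, V i ≠ ⊥)
    (hperm : ∀ g ∈ G, ∀ i, ∃ j, (V i).map (Matrix.mulVecLin g) = V j) :
    (∀ i, Module.finrank ℂ (V i) = n / r) ∧
    ∃ (φ : (Fin n → ℂ) ≃ₗ[ℂ] (Fin r × Fin (n / r) → ℂ))
      (H : Set (Matrix (Fin (n / r)) (Fin (n / r)) ℂ)),
      (∀ i, ∀ v : Fin n → ℂ,
        v ∈ V i ↔ ∀ q : Fin r × Fin (n / r), q.1 ≠ i → φ v q = 0) ∧
      IsMatGroup H ∧ IrreducibleSet H ∧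
      ∀ i j : Fin r,
        {B : Matrix (Fin (n / r)) (Fin (n / r)) ℂ | B ≠ 0 ∧ ∃ A ∈ G,
          B = Matrix.of fun x y =>
            LinearMap.toMatrix'
              ((φ.toLinearMap ∘ₗ Matrix.mulVecLin A) ∘ₗ φ.symm.toLinearMap)
              (i, x) (j, y)} = H := by
  have hInternal : DirectSum.IsInternal V :=
    DirectSum.isInternal_submodule_of_iSupIndep_of_iSup_eq_top hind htop
  let i0 : Fin r := ⟨0, hr⟩
  choose g hgG hgV using cliff_trans hG hGirr V hind hne hperm i0
  have hgu : ∀ i, IsUnit (g i) := fun i => (hG.2.2 _ (hgG i)).1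
  have hinj : ∀ A ∈ G, Function.Injective (Matrix.mulVecLin A) := fun A hA x y hxy => by
    have h1 := cliff_inv_mulVec (hG.2.2 A hA).1 x
    have h2 := cliff_inv_mulVec (hG.2.2 A hA).1 y
    simp only [Matrix.mulVecLin_apply] at hxy
    rw [← h1, hxy, h2]
  obtain ⟨e, he⟩ : ∃ e : ∀ i, V i0 ≃ₗ[ℂ] V i, ∀ i x, (e i x : Fin n → ℂ) = (g i).mulVec x :=
    ⟨fun i => ((V i0).equivMapOfInjective _ (hinj _ (hgG i))).trans (LinearEquiv.ofEq _ _ (hgV i)),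
      fun i x => rfl⟩
  have hdim : ∀ i, Module.finrank ℂ (V i) = n / r := by
    have h1 : ∀ i, Module.finrank ℂ (V i) = Module.finrank ℂ (V i0) := fun i =>
      (e i).finrank_eq.symm
    let bb := hInternal.collectedBasis (fun i => Module.finBasis ℂ (V i))
    have h2 := Module.finrank_eq_card_basis bb
    simp only [Module.finrank_fin_fun, Fintype.card_sigma, Fintype.card_fin, h1,
      Finset.sum_const, Finset.card_univ, smul_eq_mul] at h2
    intro i
    rw [h1]
    exact (Nat.div_eq_of_eq_mul_right hr h2).symm
  refine ⟨hdim, ?_⟩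
  generalize n / r = d at hdim ⊢
  have hd : 0 < d := by
    rw [← hdim i0, Module.finrank_pos_iff, Submodule.nontrivial_iff_ne_bot]
    exact hne i0
  let b0 : Module.Basis (Fin d) ℂ (V i0) :=
    Module.finBasisOfFinrankEq ℂ (V i0) (hdim i0)
  let β : (Fin d → ℂ) →ₗ[ℂ] (Fin n → ℂ) := (V i0).subtype ∘ₗ b0.equivFun.symm.toLinearMap
  have hβ : Function.Injective β := (V i0).subtype_injective.comp b0.equivFun.symm.injective
  have hβr : LinearMap.range β = V i0 := by
    rw [LinearMap.range_comp, LinearEquiv.range, Submodule.map_top, Submodule.range_subtype]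
  let bb := (hInternal.collectedBasis (fun i => b0.map (e i))).reindex (Equiv.sigmaEquivProd (Fin r) (Fin d))
  have hbb : ∀ i x, bb (i, x) = (g i).mulVec (b0 x : Fin n → ℂ) := by
    intro i x
    rw [← he]
    simp [bb]
    rfl
  let φ : (Fin n → ℂ) ≃ₗ[ℂ] (Fin r × Fin d → ℂ) := bb.equivFun
  have hφs : ∀ i c, φ.symm (fun q => if q.1 = i then c q.2 else 0) = (g i).mulVec (β c) := by
    intro i c
    have h1 : β c = ∑ x, c x • (b0 x : Fin n → ℂ) := by
      simp [β, Module.Basis.equivFun_symm_apply]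
    rw [Module.Basis.equivFun_symm_apply, h1, Fintype.sum_prod_type,
      Finset.sum_eq_single i, ← Matrix.mulVecLin_apply, map_sum]
    · simp [hbb]
    · intro j _ hj
      simp [hj]
    · simp
  have hφ : ∀ i c, φ ((g i).mulVec (β c)) = fun q => if q.1 = i then c q.2 else 0 := by
    intro i c
    rw [← hφs, LinearEquiv.apply_symm_apply]
  have hVg : ∀ i v, v ∈ V i ↔ ∃ c, v = (g i).mulVec (β c) := by
    intro i v
    rw [← hgV i, ← hβr]
    constructor
    · rintro ⟨_, ⟨c, rfl⟩, rfl⟩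
      exact ⟨c, rfl⟩
    · rintro ⟨c, rfl⟩
      exact ⟨_, ⟨c, rfl⟩, rfl⟩
  have hVφ : ∀ i, ∀ v : Fin n → ℂ, v ∈ V i ↔ ∀ q : Fin r × Fin d, q.1 ≠ i → φ v q = 0 := by
    intro i v
    rw [hVg]
    constructor
    · rintro ⟨c, rfl⟩ q hq
      rw [hφ]
      simp [hq]
    · intro h
      refine ⟨fun x => φ v (i, x), ?_⟩
      rw [← hφs, LinearEquiv.eq_symm_apply]
      funext q
      by_cases hq : q.1 = i
      · subst hq; simp
      · rw [h q hq, if_neg hq]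
  let blk : Mat n → Fin r → Fin r → Mat d := fun A i j => Matrix.of fun x y =>
    LinearMap.toMatrix' ((φ.toLinearMap ∘ₗ Matrix.mulVecLin A) ∘ₗ φ.symm.toLinearMap) (i, x) (j, y)
  have hblk : ∀ A i j c, (blk A i j).mulVec c =
      fun x => φ (A.mulVec ((g j).mulVec (β c))) (i, x) := by
    intro A i j c
    funext x
    rw [← hφs]
    have h1 := LinearMap.toMatrix'_mulVec
      ((φ.toLinearMap ∘ₗ Matrix.mulVecLin A) ∘ₗ φ.symm.toLinearMap)
      (fun q => if q.1 = j then c q.2 else 0)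
    have h2 := congrFun h1 (i, x)
    refine Eq.trans ?_ h2
    simp only [Matrix.mulVec, dotProduct]
    rw [Fintype.sum_prod_type, Finset.sum_eq_single j]
    · simp [blk]
    · intro k _ hk
      simp [hk]
    · simp
  have hext : ∀ B B' : Mat d, (∀ c, B.mulVec c = B'.mulVec c) → B = B' := fun B B' h =>
    Matrix.ext_of_mulVec_single fun i => h _
  let H : Set (Mat d) := {B | ∃ h ∈ G, ∀ c, h.mulVec (β c) = β (B.mulVec c)}
  have hHu : ∀ B ∈ H, IsUnit B := by
    rintro B ⟨h, hh, hB⟩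
    rw [← Matrix.mulVec_injective_iff_isUnit]
    intro x y hxy
    apply hβ
    apply hinj h hh
    simp only [Matrix.mulVecLin_apply]
    rw [hB, hB]
    exact congrArg β hxy
  have hHg : IsMatGroup H := by
    refine ⟨⟨1, hG.1, fun c => by simp⟩, ?_, fun B hB => ⟨hHu B hB, ?_⟩⟩
    · rintro B ⟨h, hh, hB⟩ B' ⟨h', hh', hB'⟩
      refine ⟨h * h', hG.2.1 _ hh _ hh', fun c => ?_⟩
      rw [← Matrix.mulVec_mulVec, hB', hB, Matrix.mulVec_mulVec]
    · have hu := hHu B hB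
      obtain ⟨h, hh, hB⟩ := hB
      refine ⟨h⁻¹, (hG.2.2 _ hh).2, fun c => ?_⟩
      conv_lhs => rw [← cliff_mulVec_inv hu c]
      rw [← hB, cliff_inv_mulVec (hG.2.2 _ hh).1]
  have hF1 : ∀ A ∈ G, ∀ i j, blk A i j = 0 ∨ blk A i j ∈ H := by
    intro A hA i j
    obtain ⟨k, hk⟩ := hperm A hA j
    have hmem : ∀ v ∈ V j, A.mulVec v ∈ V k := fun v hv => hk ▸ ⟨v, hv, rfl⟩
    by_cases hki : k = i
    · subst hki
      right
      refine ⟨(g k)⁻¹ * A * g j,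
        hG.2.1 _ (hG.2.1 _ (hG.2.2 _ (hgG k)).2 _ hA) _ (hgG j), fun c => ?_⟩
      obtain ⟨c', hc'⟩ := (hVg k _).1 (hmem _ ((hVg j _).2 ⟨c, rfl⟩))
      rw [← Matrix.mulVec_mulVec, ← Matrix.mulVec_mulVec, hblk, hc', cliff_inv_mulVec (hgu k), hφ]
      simp
    · left
      refine hext _ _ fun c => ?_
      rw [hblk, Matrix.zero_mulVec]
      funext x
      exact (hVφ k _).1 (hmem _ ((hVg j _).2 ⟨c, rfl⟩)) (i, x) (Ne.symm hki)
  have hF2 : ∀ B ∈ H, ∀ i j, ∃ A ∈ G, B = blk A i j := by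
    rintro B ⟨h, hh, hB⟩ i j
    refine ⟨g i * h * (g j)⁻¹,
      hG.2.1 _ (hG.2.1 _ (hgG i) _ hh) _ (hG.2.2 _ (hgG j)).2, hext _ _ fun c => ?_⟩
    rw [hblk, ← Matrix.mulVec_mulVec, cliff_inv_mulVec (hgu j), ← Matrix.mulVec_mulVec, hB, hφ]
    simp
  have hF3 : ∀ B ∈ H, B ≠ 0 := by
    rintro B hB rfl
    have : Nonempty (Fin d) := ⟨⟨0, hd⟩⟩
    exact not_isUnit_zero (hHu _ hB)
  refine ⟨φ, H, hVφ, hHg, ?_, ?_⟩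
  · intro W hW
    let W' : Submodule ℂ (Fin n → ℂ) :=
      ⨅ i : Fin r, W.comap (LinearMap.pi (fun x => LinearMap.proj (i, x)) ∘ₗ φ.toLinearMap)
    have hW' : ∀ v, v ∈ W' ↔ ∀ i, (fun x => φ v (i, x)) ∈ W := by
      intro v
      simp only [W', Submodule.mem_iInf]
      rfl
    have hinv : ∀ A ∈ G, ∀ v ∈ W', A.mulVec v ∈ W' := by
      intro A hA v hv
      rw [hW'] at hv ⊢
      intro i
      have hsum : v = ∑ j, (g j).mulVec (β fun x => φ v (j, x)) := by
        apply φ.injective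
        rw [map_sum]
        funext q
        simp [hφ]
      have h1 : (fun x => φ (A.mulVec v) (i, x)) =
          ∑ j, (blk A i j).mulVec (fun x => φ v (j, x)) := by
        conv_lhs => rw [hsum, ← Matrix.mulVecLin_apply, map_sum, map_sum]
        funext x
        simp only [Finset.sum_apply, hblk, Matrix.mulVecLin_apply]
      rw [h1]
      refine Submodule.sum_mem _ fun j _ => ?_
      rcases hF1 A hA i j with h0 | hH
      · rw [h0, Matrix.zero_mulVec]; exact W.zero_mem
      · exact hW _ hH _ (hv j)
    have hc : ∀ c : Fin d → ℂ, φ.symm (fun q => c q.2) ∈ W' ↔ c ∈ W := by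
      intro c
      rw [hW']
      simp only [LinearEquiv.apply_symm_apply]
      exact ⟨fun h => h i0, fun h _ => h⟩
    rcases hGirr W' hinv with h | h
    · left
      rw [eq_bot_iff]
      intro c hcW
      have h1 := (hc c).2 hcW
      rw [h, Submodule.mem_bot, LinearEquiv.map_eq_zero_iff] at h1
      rw [Submodule.mem_bot]
      funext x
      exact congrFun h1 (i0, x)
    · right
      rw [eq_top_iff]
      intro c _
      rw [← hc, h]
      trivial
  · intro i j
    ext B
    constructor
    · rintro ⟨h0, A, hA, rfl⟩
      exact (hF1 A hA i j).resolve_left h0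
    · intro hB
      exact ⟨hF3 B hB, hF2 B hB i j⟩

/-- Clifford's theorem, block-monomial form. -/
theorem stmt6 {n r : ℕ} (G N : Set (Mat n))
    (hGgrp : IsMatGroup G) (hGirr : IrreducibleSet G)
    (hNgrp : IsMatGroup N) (hNsub : N ⊆ G)
    (hNnormal : ∀ g ∈ G, ∀ A ∈ N, g⁻¹ * A * g ∈ N)
    (hNred : ∃ W : Submodule ℂ (Fin n → ℂ), InvariantUnder N W ∧ W ≠ ⊥ ∧ W ≠ ⊤)
    (hns : ¬ ∃ (m s : ℕ) (h : m * s = n) (N0 : Set (Mat s)) (T : Mat n),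
      IrreducibleSet N0 ∧ IsUnit T ∧
      (fun A => T⁻¹ * A * T) '' N =
        (fun B => Matrix.reindex (finCongr h) (finCongr h) (kron (1 : Mat m) B)) '' N0)
    (V : Fin r → Submodule ℂ (Fin n → ℂ)) (hVinj : Function.Injective V)
    (hVmax : Set.range V =
      {W | IsotypicUnder N W ∧ ∀ W', IsotypicUnder N W' → W ≤ W' → W = W'}) :
    1 < r ∧ (∀ i, Module.finrank ℂ (V i) = n / r) ∧
    DirectSum.IsInternal V ∧
    (∀ A ∈ G, ∀ i, ∃ j, ∀ v ∈ V i, A.mulVec v ∈ V j) ∧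
    ∃ (φ : (Fin n → ℂ) ≃ₗ[ℂ] (Fin r × Fin (n / r) → ℂ))
      (H : Set (Matrix (Fin (n / r)) (Fin (n / r)) ℂ)),
      (∀ i, ∀ v : Fin n → ℂ,
        v ∈ V i ↔ ∀ q : Fin r × Fin (n / r), q.1 ≠ i → φ v q = 0) ∧
      IsMatGroup H ∧ IrreducibleSet H ∧
      ∀ i j : Fin r,
        {B : Matrix (Fin (n / r)) (Fin (n / r)) ℂ | B ≠ 0 ∧ ∃ A ∈ G,
          B = Matrix.of fun x y =>
            LinearMap.toMatrix'
              ((φ.toLinearMap ∘ₗ Matrix.mulVecLin A) ∘ₗ φ.symm.toLinearMap)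
              (i, x) (j, y)} = H := by
  have hn : 0 < n := by
    rcases Nat.eq_zero_or_pos n with rfl | h
    · obtain ⟨W, _, h1, _⟩ := hNred
      exact absurd (Subsingleton.elim W ⊥) h1
    · exact h
  have hnorm : ∀ g ∈ G, CliffNorm N g := by
    intro g hg
    obtain ⟨hu, hi⟩ := hGgrp.2.2 g hg
    refine ⟨hu, hNnormal g hg, fun A hA => ?_⟩
    have := hNnormal _ hi A hA
    rwa [Matrix.nonsing_inv_nonsing_inv g ((Matrix.isUnit_iff_isUnit_det g).1 hu)] at this
  have hs : sSup {U | IsIrredSubrep N U} = ⊤ := by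
    refine (hGirr _ fun A hA => ?_).resolve_left fun h0 => ?_
    · suffices h : sSup {U | IsIrredSubrep N U} ≤
          (sSup {U | IsIrredSubrep N U}).comap (Matrix.mulVecLin A) from fun v hv => h hv
      refine sSup_le fun U hU => ?_
      rw [← Submodule.map_le_iff_le_comap]
      exact le_sSup ((hnorm A hA).irred hU)
    · obtain ⟨U, hU⟩ := cliff_exists_irred (S := N) hn
      exact hU.2.1 (by rw [eq_bot_iff, ← h0]; exact le_sSup hU)
  obtain ⟨hind, htop, hne⟩ := cliff_decomp hn hs V hVinj hVmax
  have hmax : ∀ i, CliffMax N (V i) := fun i => by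
    have : V i ∈ Set.range V := ⟨i, rfl⟩
    rw [hVmax] at this
    exact this
  have hperm : ∀ g ∈ G, ∀ i, ∃ j, (V i).map (Matrix.mulVecLin g) = V j := by
    intro g hg i
    have : (V i).map (Matrix.mulVecLin g) ∈ Set.range V := by
      rw [hVmax]
      exact (hnorm g hg).max (hmax i)
    obtain ⟨j, hj⟩ := this
    exact ⟨j, hj.symm⟩
  have hr : 1 < r := by
    by_contra hr
    have hsub : Subsingleton (Fin r) := Fin.subsingleton_iff_le_one.2 (by omega)
    obtain ⟨i, hi⟩ : ∃ i, V i = ⊤ := by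
      rcases isEmpty_or_nonempty (Fin r) with he | ⟨⟨i⟩⟩
      · exfalso
        have : Nonempty (Fin n) := ⟨⟨0, hn⟩⟩
        rw [iSup_of_empty] at htop
        exact bot_ne_top htop
      · refine ⟨i, ?_⟩
        rw [← htop]
        refine le_antisymm (le_iSup V i) (iSup_le fun j => ?_)
        rw [Subsingleton.elim j i]
    have h1 := (hmax i).1
    rw [hi] at h1
    exact hns (cliff_tensor hn N hs h1)
  obtain ⟨hdim, hφ⟩ := cliff_blocks hGgrp hGirr (by omega) V hind htop hne hperm
  refine ⟨hr, hdim, DirectSum.isInternal_submodule_of_iSupIndep_of_iSup_eq_top hind htop, ?_, hφ⟩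
  intro A hA i
  obtain ⟨j, hj⟩ := hperm A hA i
  exact ⟨j, fun v hv => hj ▸ ⟨v, hv, rfl⟩⟩
end

section
/- Let n > 1 be odd, let K ⊆ M_n(ℂ) be an indecomposable abelian permutation matrix group, let G_1, …, G_k be generators of all the subgroups of K of prime order, and let J ∈ D_n(±1). Then J ∈ J_K^+ if and only if avg_{G_i}(J) = I for all i = 1, …, k. -/
open Matrix BigOperators
open scoped Classical

lemma permMat_mul {n : ℕ} (σ τ : Equiv.Perm (Fin n)) :
    permMat (σ * τ) = permMat σ * permMat τ := by
  ext i j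
  simp only [permMat, Matrix.mul_apply, Matrix.of_apply, mul_ite, mul_one, mul_zero,
    Finset.sum_ite_eq', Finset.mem_univ, if_true, Equiv.Perm.mul_apply]
  congr

lemma permMat_one {n : ℕ} : permMat (1 : Equiv.Perm (Fin n)) = 1 := by
  ext i j
  simp only [permMat, Matrix.one_apply, Matrix.of_apply, Equiv.Perm.one_apply]
  congr

lemma permMat_inj {n : ℕ} : Function.Injective (permMat (n := n)) := by
  intro σ τ h
  ext j : 1
  have := congrFun (congrFun h (σ j)) j
  by_contra hne
  simp [permMat, hne] at this

/-- `permMat` as a monoid homomorphism. -/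
noncomputable def permHom (n : ℕ) : Equiv.Perm (Fin n) →* Mat n where
  toFun := permMat
  map_one' := permMat_one
  map_mul' := permMat_mul

lemma permMat_pow {n : ℕ} (σ : Equiv.Perm (Fin n)) (k : ℕ) :
    permMat (σ ^ k) = permMat σ ^ k := map_pow (permHom n) σ k

lemma orderOf_permMat {n : ℕ} (σ : Equiv.Perm (Fin n)) :
    orderOf (permMat σ) = orderOf σ :=
  orderOf_injective (permHom n) permMat_inj σ

lemma permMat_inv {n : ℕ} (σ : Equiv.Perm (Fin n)) :
    (permMat σ)⁻¹ = permMat σ⁻¹ := by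
  apply Matrix.inv_eq_left_inv
  rw [← permMat_mul, inv_mul_cancel, permMat_one]

lemma conj_diag {n : ℕ} (σ : Equiv.Perm (Fin n)) (d : Fin n → ℂ) :
    (permMat σ)⁻¹ * Matrix.diagonal d * permMat σ = Matrix.diagonal (fun x => d (σ x)) := by
  rw [permMat_inv]
  ext i j
  rw [Matrix.mul_apply]
  simp only [Matrix.mul_diagonal, permMat, Matrix.of_apply, Matrix.diagonal_apply]
  rw [Finset.sum_eq_single (σ j)]
  · by_cases h : i = j
    · subst h; simp
    · simp [h]
  · intro b _ hb
    simp [hb]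
  · simp

lemma prod_diag {n : ℕ} (f : ℕ → Fin n → ℂ) (m : ℕ) :
    ((List.range m).map fun k => Matrix.diagonal (f k)).prod
      = Matrix.diagonal (fun x => ∏ k ∈ Finset.range m, f k x) := by
  induction m with
  | zero => simp
  | succ m ih =>
    rw [List.range_succ, List.map_append, List.prod_append, ih]
    simp [Finset.prod_range_succ]

lemma avgMat_perm {n : ℕ} (σ : Equiv.Perm (Fin n)) (d : Fin n → ℂ) :
    avgMat (permMat σ) (Matrix.diagonal d)
      = Matrix.diagonal (fun x => ∏ k ∈ Finset.range (orderOf σ), d ((σ ^ k) x)) := by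
  unfold avgMat
  rw [orderOf_permMat, ← prod_diag]
  congr 1
  apply List.map_congr_left
  intro k _
  rw [← permMat_pow, conj_diag]

lemma avg_eq_one_iff {n : ℕ} (σ : Equiv.Perm (Fin n)) (d : Fin n → ℂ) :
    avgMat (permMat σ) (Matrix.diagonal d) = 1 ↔
      ∀ x, ∏ k ∈ Finset.range (orderOf σ), d ((σ ^ k) x) = 1 := by
  rw [avgMat_perm, ← Matrix.diagonal_one, Matrix.diagonal_injective.eq_iff, funext_iff]

lemma prod_zpowers {n : ℕ} (σ : Equiv.Perm (Fin n)) (f : Equiv.Perm (Fin n) → ℂ) :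
    ∏ k ∈ Finset.range (orderOf σ), f (σ ^ k)
      = ∏ g ∈ Finset.univ.filter (· ∈ Subgroup.zpowers σ), f g := by
  have : Finset.univ.filter (· ∈ Subgroup.zpowers σ)
      = (Finset.range (orderOf σ)).image (σ ^ ·) := by
    ext g
    simp only [Finset.mem_filter, Finset.mem_univ, true_and]
    exact mem_zpowers_iff_mem_range_orderOf
  rw [this, Finset.prod_image]
  intro a ha b hb h
  exact pow_injOn_Iio_orderOf (by simpa using ha) (by simpa using hb) h

lemma prod_range_mul_aux (f : ℕ → ℂ) (p r : ℕ) :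
    ∏ k ∈ Finset.range (p * r), f k
      = ∏ a ∈ Finset.range p, ∏ b ∈ Finset.range r, f (a * r + b) := by
  induction p with
  | zero => simp
  | succ p ih => rw [Nat.succ_mul, Finset.prod_range_add, ih, Finset.prod_range_succ]

/-- For an indecomposable abelian permutation group `K` (`n > 1` odd),
with `G_1, …, G_k` generators of all the prime-order subgroups of `K`, a signed
diagonal matrix `J` lies in `J_K^+` iff `avg_{G_i}(J) = I` for all `i`. -/
theorem stmt7 {n : ℕ} (hodd : Odd n) (hn : 1 < n) (K : Set (Mat n))
    (hgrp : IsMatGroup K) (hperm : ∀ M ∈ K, IsPermMat M)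
    (hab : ∀ A ∈ K, ∀ B ∈ K, A * B = B * A)
    (hind : IndecomposableSet K)
    {k : ℕ} (G : Fin k → Mat n)
    (hGmem : ∀ i, G i ∈ K)
    (hGprime : ∀ i, Nat.Prime (orderOf (G i)))
    (hGall : ∀ H ∈ K, Nat.Prime (orderOf H) → ∃ i, ∃ t : ℕ, H = G i ^ t)
    (J : Mat n) (hJ : IsSignedDiag J) :
    J ∈ JsetPlus K ↔ ∀ i, avgMat (G i) J = 1 := by
  obtain ⟨d, hd, rfl⟩ := hJ
  constructor
  · rintro ⟨⟨-, h⟩, hdet⟩ i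
    rw [h _ (hGmem i), hdet, one_smul]
    intro h1
    have := hGprime i
    rw [h1, orderOf_one] at this
    exact Nat.not_prime_one this
  · intro h
    -- permutations of prime order
    have key1 : ∀ τ : Equiv.Perm (Fin n), permMat τ ∈ K → Nat.Prime (orderOf τ) →
        ∀ x, ∏ k ∈ Finset.range (orderOf τ), d ((τ ^ k) x) = 1 := by
      intro τ hτ hp x
      obtain ⟨i, t, hit⟩ := hGall _ hτ (by rwa [orderOf_permMat])
      obtain ⟨σ, hσ⟩ := hperm _ (hGmem i)
      have hq := hGprime i
      have hh := h i
      rw [hσ, orderOf_permMat] at hq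
      rw [hσ, avg_eq_one_iff] at hh
      rw [hσ, ← permMat_pow] at hit
      have hτσ : τ = σ ^ t := permMat_inj hit
      have hle : Subgroup.zpowers τ ≤ Subgroup.zpowers σ := by
        rw [Subgroup.zpowers_le, hτσ]
        exact Subgroup.npow_mem_zpowers σ t
      have hdvd : orderOf τ ∣ orderOf σ := by
        rw [hτσ]; exact orderOf_pow_dvd t
      have hpq : orderOf τ = orderOf σ := (Nat.prime_dvd_prime_iff_eq hp hq).1 hdvd
      have heq : Subgroup.zpowers τ = Subgroup.zpowers σ := by
        apply Subgroup.eq_of_le_of_card_ge hle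
        rw [Nat.card_zpowers, Nat.card_zpowers, hpq]
      have h1 := hh x
      rw [prod_zpowers σ (fun g => d (g x))] at h1
      rw [prod_zpowers τ (fun g => d (g x)), ← h1]
      apply Finset.prod_congr _ (fun _ _ => rfl)
      ext g
      simp only [Finset.mem_filter, heq]
    have hpowK : ∀ (τ : Equiv.Perm (Fin n)) (k : ℕ), permMat τ ∈ K → permMat (τ ^ k) ∈ K := by
      intro τ k hτ
      induction k with
      | zero => rw [pow_zero, permMat_one]; exact hgrp.1
      | succ k ih => rw [pow_succ, permMat_mul]; exact hgrp.2.1 _ ih _ hτ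
    have exprime : ∀ τ : Equiv.Perm (Fin n), τ ≠ 1 →
        ∃ p r : ℕ, p.Prime ∧ orderOf τ = p * r ∧ orderOf (τ ^ r) = p := by
      intro τ hne
      have h1 : orderOf τ ≠ 1 := fun h => hne (orderOf_eq_one_iff.1 h)
      obtain ⟨p, hp, r, hr⟩ := Nat.exists_prime_and_dvd h1
      refine ⟨p, r, hp, hr, ?_⟩
      have hpos := orderOf_pos τ
      have hr0 : r ≠ 0 := by rintro rfl; omega
      rw [orderOf_pow_of_dvd hr0 ⟨p, by rw [hr, mul_comm]⟩, hr]
      exact Nat.mul_div_cancel _ (Nat.pos_of_ne_zero hr0)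
    have key2 : ∀ τ : Equiv.Perm (Fin n), permMat τ ∈ K → τ ≠ 1 →
        ∀ x, ∏ k ∈ Finset.range (orderOf τ), d ((τ ^ k) x) = 1 := by
      intro τ hτ hne x
      obtain ⟨p, r, hp, hr, hpr⟩ := exprime τ hne
      rw [hr, prod_range_mul_aux, Finset.prod_comm]
      apply Finset.prod_eq_one
      intro b _
      have := key1 (τ ^ r) (hpowK τ r hτ) (by rwa [hpr]) ((τ ^ b) x)
      rw [hpr] at this
      rw [← this]
      apply Finset.prod_congr rfl
      intro a _
      rw [← Equiv.Perm.mul_apply, ← pow_mul, ← pow_add, mul_comm r a]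
    -- transitivity
    have trans : ∀ x y : Fin n, ∃ τ : Equiv.Perm (Fin n), permMat τ ∈ K ∧ τ x = y := by
      intro x y
      have := hind {y | ∃ τ : Equiv.Perm (Fin n), permMat τ ∈ K ∧ τ x = y} (by
        rintro A hA j ⟨τ, hτ, rfl⟩ i hi
        obtain ⟨σ, rfl⟩ := hperm A hA
        refine ⟨σ * τ, by rw [permMat_mul]; exact hgrp.2.1 _ hA _ hτ, ?_⟩
        by_contra hne
        apply hi
        simp only [permMat, Matrix.of_apply]
        rw [if_neg]
        exact fun h => hne h.symm)
      rcases this with h0 | h0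
      · exfalso
        have : x ∈ (∅ : Set (Fin n)) := by
          rw [← h0]
          exact ⟨1, by rw [permMat_one]; exact hgrp.1, rfl⟩
        exact this
      · have : y ∈ (Set.univ : Set (Fin n)) := trivial
        rw [← h0] at this
        exact this
    have free : ∀ τ : Equiv.Perm (Fin n), permMat τ ∈ K → ∀ x, τ x = x → τ = 1 := by
      intro τ hτ x hx
      ext y : 1
      obtain ⟨σ, hσ, rfl⟩ := trans x y
      have hc : τ * σ = σ * τ := permMat_inj (by
        rw [permMat_mul, permMat_mul]; exact hab _ hτ _ hσ)
      calc τ (σ x) = (τ * σ) x := rfl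
        _ = σ (τ x) := by rw [hc]; rfl
        _ = σ x := by rw [hx]
    have hdet : (Matrix.diagonal d).det = 1 := by
      rw [Matrix.det_diagonal]
      obtain ⟨τ, hτ, hτ01⟩ := trans ⟨0, by omega⟩ ⟨1, hn⟩
      have hne : τ ≠ 1 := by
        rintro rfl
        simp at hτ01
      obtain ⟨p, r, hp, hr, hpr⟩ := exprime τ hne
      have hρ := hpowK τ r hτ
      generalize τ ^ r = ρ at hpr hρ
      have h1 := key1 ρ hρ (by rwa [hpr])
      have h2 : (∏ x, d x) ^ p = 1 := by
        have h3 : ∏ x, ∏ k ∈ Finset.range (orderOf ρ), d ((ρ ^ k) x) = 1 :=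
          Finset.prod_eq_one fun x _ => h1 x
        rw [Finset.prod_comm, hpr] at h3
        rw [← h3, Finset.prod_congr rfl (fun k _ => Equiv.prod_comp (ρ ^ k) d)]
        simp
      have hp2 : p ≠ 2 := by
        rintro rfl
        have : Fact (Nat.Prime 2) := ⟨Nat.prime_two⟩
        have hex : ∃ x, ρ x = x := by
          apply Equiv.Perm.exists_fixed_point_of_prime (p := 2) (n := 1)
          · rw [Fintype.card_fin]; exact hodd.not_two_dvd_nat
          · rw [pow_one, ← hpr, pow_orderOf_eq_one]
        obtain ⟨x, hx⟩ := hex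
        rw [free ρ hρ x hx, orderOf_one] at hpr
        omega
      have hpm : (∏ x, d x) = 1 ∨ (∏ x, d x) = -1 := by
        apply Finset.prod_induction d (fun z => z = 1 ∨ z = -1)
        · rintro a b (rfl | rfl) (rfl | rfl) <;> simp
        · left; rfl
        · exact fun x _ => hd x
      rcases hpm with h3 | h3
      · exact h3
      · rw [h3, (hp.odd_of_ne_two hp2).neg_one_pow] at h2
        norm_num at h2
    refine ⟨⟨⟨d, hd, rfl⟩, ?_⟩, hdet⟩
    intro H hH hne
    obtain ⟨τ, rfl⟩ := hperm H hH
    rw [hdet, one_smul, avg_eq_one_iff]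
    apply key2 τ hH
    rintro rfl
    exact hne permMat_one
end

section
/- For every integer n > 1, the group J_n^+ has exactly 2^{φ(n)} elements, where φ is Euler's totient function. -/
open Matrix BigOperators
open scoped Classical

/-- Indices congruent to `r` modulo `e`. -/
abbrev resid (n e r : ℕ) : Finset (Fin n) := Finset.univ.filter fun i : Fin n => (i : ℕ) % e = r

open Polynomial in
lemma aux_coprime {m d e : ℕ} (hm : Odd m) (hd : d ∣ m) (he : e ∣ m) (hne : d ≠ e) :
    IsCoprime (cyclotomic d (ZMod 2)) (cyclotomic e (ZMod 2)) := by
  have hm0 : 0 < m := hm.pos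
  have hsep : (X ^ m - 1 : (ZMod 2)[X]).Separable := by
    have := separable_X_pow_sub_C (F := ZMod 2) (n := m) 1 (by
      intro h
      rw [ZMod.natCast_eq_zero_iff] at h
      exact (Nat.not_even_iff_odd.2 hm) (even_iff_two_dvd.2 h)) one_ne_zero
    simpa using this
  apply Polynomial.Separable.isCoprime
  apply hsep.of_dvd
  rw [← prod_cyclotomic_eq_X_pow_sub_one hm0,
    ← Finset.prod_pair (f := fun i => cyclotomic i (ZMod 2)) hne]
  apply Finset.prod_dvd_prod_of_subset
  intro x hx
  simp only [Finset.mem_insert, Finset.mem_singleton] at hx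
  rcases hx with rfl | rfl <;> simp [*, hm0.ne']

open Polynomial in
lemma aux_pow (a m : ℕ) :
    (X ^ (2 ^ a * m) - 1 : (ZMod 2)[X]) = (X ^ m - 1) ^ (2 ^ a) := by
  rw [sub_pow_char_pow, one_pow, ← pow_mul, mul_comm]

open Polynomial in
lemma aux_M {n : ℕ} (hn : 0 < n) : ∃ M : (ZMod 2)[X], M ≠ 0 ∧
    M.natDegree + Nat.totient n = n ∧
    ∀ f : (ZMod 2)[X], (∀ e, e ∣ n → e < n → (X ^ e - 1) ∣ f) ↔ M ∣ f := by
  obtain ⟨a, m, hm, rfl⟩ := Nat.exists_eq_two_pow_mul_odd hn.ne'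
  have hm0 : 0 < m := hm.pos
  have hcop : Nat.Coprime (2 ^ a) m := Nat.Coprime.pow_left _ (Nat.coprime_two_left.2 hm)
  set P : (ZMod 2)[X] := ∏ d ∈ m.properDivisors, cyclotomic d (ZMod 2) with hP
  have hPm : cyclotomic m (ZMod 2) * P = X ^ m - 1 := by
    rw [← prod_cyclotomic_eq_X_pow_sub_one hm0, ← Nat.cons_self_properDivisors hm0.ne',
      Finset.prod_cons]
  have hPmonic : P.Monic := monic_prod_of_monic _ _ (fun d _ => cyclotomic.monic d _)
  have hle : Nat.totient (2 ^ a) ≤ 2 ^ a := Nat.totient_le _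
  have hMm : (P ^ (2 ^ a) * cyclotomic m (ZMod 2) ^ (2 ^ a - Nat.totient (2 ^ a))).Monic :=
    (hPmonic.pow _).mul ((cyclotomic.monic m _).pow _)
  refine ⟨P ^ (2 ^ a) * cyclotomic m (ZMod 2) ^ (2 ^ a - Nat.totient (2 ^ a)), hMm.ne_zero,
    ?_, ?_⟩
  · have hQ : (cyclotomic m (ZMod 2) ^ (Nat.totient (2 ^ a))).Monic :=
      (cyclotomic.monic m _).pow _
    have h1 : (P ^ (2 ^ a) * cyclotomic m (ZMod 2) ^ (2 ^ a - Nat.totient (2 ^ a))) *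
        cyclotomic m (ZMod 2) ^ (Nat.totient (2 ^ a)) = X ^ (2 ^ a * m) - 1 := by
      rw [mul_assoc, ← pow_add, Nat.sub_add_cancel hle, aux_pow, ← hPm, mul_pow, mul_comm]
    have h2 := congrArg natDegree h1
    rw [hMm.natDegree_mul hQ, (cyclotomic.monic m _).natDegree_pow, natDegree_cyclotomic] at h2
    have h3 : (X ^ (2 ^ a * m) - 1 : (ZMod 2)[X]).natDegree = 2 ^ a * m := by
      simpa using natDegree_X_pow_sub_C (R := ZMod 2) (n := 2 ^ a * m) (r := 1)
    rw [h3] at h2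
    rw [Nat.totient_mul hcop]
    exact h2
  · intro f
    constructor
    · intro h
      apply IsCoprime.mul_dvd
      · apply IsCoprime.pow
        apply IsCoprime.prod_left
        intro d hd
        rw [Nat.mem_properDivisors] at hd
        exact aux_coprime hm hd.1 dvd_rfl hd.2.ne
      · rw [hP, ← Finset.prod_pow]
        apply Finset.prod_dvd_of_coprime
        · intro d hd e he hne
          have hd := Nat.mem_properDivisors.1 hd
          have he := Nat.mem_properDivisors.1 he
          exact (aux_coprime hm hd.1 he.1 hne).pow
        · intro d hd
          rw [Nat.mem_properDivisors] at hd
          refine dvd_trans ?_ (h (2 ^ a * d) (mul_dvd_mul_left _ hd.1)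
            (Nat.mul_lt_mul_of_pos_left hd.2 (by positivity)))
          rw [aux_pow]
          exact pow_dvd_pow_of_dvd (cyclotomic.dvd_X_pow_sub_one d _) _
      · rcases a with _ | a
        · simp
        · have : 2 ^ (a + 1) - Nat.totient (2 ^ (a + 1)) = 2 ^ a := by
            rw [Nat.totient_prime_pow_succ Nat.prime_two, pow_succ]; omega
          rw [this]
          refine dvd_trans ?_ (h (2 ^ a * m) (mul_dvd_mul_right (pow_dvd_pow _ (by omega)) _)
            (Nat.mul_lt_mul_of_pos_right (Nat.pow_lt_pow_right (by norm_num) (by omega)) hm0))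
          rw [aux_pow]
          exact pow_dvd_pow_of_dvd (cyclotomic.dvd_X_pow_sub_one m _) _
    · intro h e he hlt
      refine dvd_trans ?_ h
      obtain ⟨u, m', hu, hm', rfl⟩ := (Nat.dvd_mul).1 he
      obtain ⟨b, hb, rfl⟩ := (Nat.dvd_prime_pow Nat.prime_two).1 hu
      rw [aux_pow]
      rcases (Nat.le_of_dvd hm0 hm').lt_or_eq with hlt' | rfl
      · apply Dvd.dvd.mul_right
        refine dvd_trans (pow_dvd_pow _ (Nat.pow_le_pow_right (by norm_num) hb))
          (pow_dvd_pow_of_dvd ?_ _)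
        rw [← prod_cyclotomic_eq_X_pow_sub_one (Nat.pos_of_dvd_of_pos hm' hm0)]
        apply Finset.prod_dvd_prod_of_subset
        intro x hx
        rw [Nat.mem_divisors] at hx
        rw [Nat.mem_properDivisors]
        exact ⟨hx.1.trans hm', (Nat.le_of_dvd (Nat.pos_of_ne_zero hx.2) hx.1).trans_lt hlt'⟩
      · have hba : b < a := by
          rcases hb.lt_or_eq with h | rfl
          · exact h
          · exact absurd hlt (lt_irrefl _)
        rw [← hPm, mul_pow, mul_comm]
        apply mul_dvd_mul
        · exact pow_dvd_pow _ (Nat.pow_le_pow_right (by norm_num) hb)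
        · apply pow_dvd_pow
          obtain ⟨a, rfl⟩ : ∃ c, a = c + 1 := ⟨a - 1, by omega⟩
          have : 2 ^ (a + 1) - Nat.totient (2 ^ (a + 1)) = 2 ^ a := by
            rw [Nat.totient_prime_pow_succ Nat.prime_two, pow_succ]; omega
          rw [this]
          exact Nat.pow_le_pow_right (by norm_num) (by omega)

open Polynomial in
lemma aux_div {n e : ℕ} (he : 0 < e) (a : Fin n → ZMod 2) :
    ((X ^ e - 1 : (ZMod 2)[X]) ∣ ∑ i : Fin n, monomial (i : ℕ) (a i)) ↔
      ∀ r < e, ∑ i ∈ resid n e r, a i = 0 := by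
  set g : (ZMod 2)[X] :=
    ∑ r ∈ Finset.range e, monomial r (∑ i ∈ resid n e r, a i) with hg
  have hg' : g = ∑ i : Fin n, monomial ((i : ℕ) % e) (a i) := by
    rw [hg, ← Finset.sum_fiberwise_of_maps_to (s := Finset.univ) (t := Finset.range e)
      (g := fun i : Fin n => (i : ℕ) % e) (fun i _ => Finset.mem_range.2 (Nat.mod_lt _ he))]
    apply Finset.sum_congr rfl
    intro r _
    rw [map_sum]
    apply Finset.sum_congr rfl
    intro i hi
    rw [(Finset.mem_filter.1 hi).2]
  have hsub : (X ^ e - 1 : (ZMod 2)[X]) ∣ (∑ i : Fin n, monomial (i : ℕ) (a i)) - g := by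
    rw [hg', ← Finset.sum_sub_distrib]
    apply Finset.dvd_sum
    intro i _
    have : (monomial (i : ℕ) (a i) - monomial ((i : ℕ) % e) (a i) : (ZMod 2)[X]) =
        C (a i) * X ^ ((i : ℕ) % e) * ((X ^ e) ^ ((i : ℕ) / e) - 1) := by
      rw [← C_mul_X_pow_eq_monomial, ← C_mul_X_pow_eq_monomial, ← pow_mul, mul_sub, mul_assoc,
        ← pow_add, Nat.mod_add_div, mul_one]
    rw [this]
    exact Dvd.dvd.mul_left (sub_one_dvd_pow_sub_one _ _) _
  have h1 : ((X ^ e - 1 : (ZMod 2)[X]) ∣ ∑ i : Fin n, monomial (i : ℕ) (a i)) ↔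
      (X ^ e - 1 : (ZMod 2)[X]) ∣ g := by
    exact (dvd_iff_dvd_of_dvd_sub hsub)
  have hcoeff : ∀ r < e, g.coeff r = ∑ i ∈ resid n e r, a i := by
    intro r hr
    rw [hg, finsetSum_coeff]
    simp only [coeff_monomial]
    rw [Finset.sum_ite_eq' , if_pos (Finset.mem_range.2 hr)]
  have hdeg : g.degree < e := by
    rw [← mem_degreeLT]
    apply Submodule.sum_mem
    intro r hr
    rw [mem_degreeLT]
    exact (degree_monomial_le _ _).trans_lt (by exact_mod_cast Finset.mem_range.1 hr)
  rw [h1]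
  constructor
  · intro h r hr
    have h0 : g = 0 := by
      apply eq_zero_of_dvd_of_degree_lt h
      have : (X ^ e - 1 : (ZMod 2)[X]).degree = e := by
        simpa using degree_X_pow_sub_C (R := ZMod 2) he 1
      rw [this]; exact hdeg
    rw [← hcoeff r hr, h0, coeff_zero]
  · intro h
    have : g = 0 := by
      rw [hg]
      apply Finset.sum_eq_zero
      intro r hr
      rw [h r (Finset.mem_range.1 hr), map_zero]
    rw [this]; exact dvd_zero _

open Polynomial in
lemma aux_count {n : ℕ} (hn : 0 < n) :
    {a : Fin n → ZMod 2 | ∀ e, e ∣ n → e < n → ∀ r < e,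
      ∑ i ∈ resid n e r, a i = 0}.ncard = 2 ^ Nat.totient n := by
  obtain ⟨M, hM0, hdeg, hM⟩ := aux_M hn
  have key : ∀ a : Fin n → ZMod 2, (∀ e, e ∣ n → e < n → ∀ r < e,
      ∑ i ∈ resid n e r, a i = 0) ↔
      M ∣ ((degreeLTEquiv (ZMod 2) n).symm a : (ZMod 2)[X]) := by
    intro a
    rw [← hM]
    apply forall_congr'; intro e
    apply forall_congr'; intro he
    apply forall_congr'; intro hlt
    rw [← aux_div (Nat.pos_of_dvd_of_pos he hn)]
    rfl
  let F : (Fin (Nat.totient n) → ZMod 2) → (Fin n → ZMod 2) := fun b =>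
    degreeLTEquiv (ZMod 2) n ⟨M * ((degreeLTEquiv (ZMod 2) (Nat.totient n)).symm b : (ZMod 2)[X]), by
      rw [mem_degreeLT, degree_mul, degree_eq_natDegree hM0]
      have := mem_degreeLT.1 ((degreeLTEquiv (ZMod 2) (Nat.totient n)).symm b).2
      calc _ < (M.natDegree : WithBot ℕ) + (Nat.totient n : ℕ) :=
            WithBot.add_lt_add_left (by simp) this
        _ = n := by exact_mod_cast hdeg⟩
  have hF : Function.Injective F := by
    intro b c h
    have h1 := (degreeLTEquiv (ZMod 2) n).injective h
    have h2 := mul_left_cancel₀ hM0 (Subtype.ext_iff.1 h1)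
    exact (degreeLTEquiv (ZMod 2) (Nat.totient n)).symm.injective (Subtype.ext h2)
  have himg : {a : Fin n → ZMod 2 | ∀ e, e ∣ n → e < n → ∀ r < e,
      ∑ i ∈ resid n e r, a i = 0} = Set.range F := by
    ext a
    rw [Set.mem_ofPred_eq, key]
    constructor
    · rintro ⟨q, hq⟩
      have hqd : q ∈ degreeLT (ZMod 2) (Nat.totient n) := by
        rw [mem_degreeLT]
        have := mem_degreeLT.1 ((degreeLTEquiv (ZMod 2) n).symm a).2
        rw [hq, degree_mul, degree_eq_natDegree hM0] at this
        by_contra hcon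
        push Not at hcon
        have h2 : (n : WithBot ℕ) ≤ (M.natDegree : WithBot ℕ) + q.degree :=
          calc (n : WithBot ℕ) = (M.natDegree : WithBot ℕ) + (Nat.totient n : ℕ) := by
                exact_mod_cast hdeg.symm
            _ ≤ _ := by gcongr
        exact absurd this (not_lt.2 h2)
      refine ⟨degreeLTEquiv (ZMod 2) (Nat.totient n) ⟨q, hqd⟩, ?_⟩
      rw [← LinearEquiv.eq_symm_apply]
      apply Subtype.ext
      simp [hq]
    · rintro ⟨b, rfl⟩
      simp [F]
  rw [himg, ← Set.image_univ, Set.ncard_image_of_injective _ hF, Set.ncard_univ]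
  simp

lemma cyc_pow {n : ℕ} (hn : 0 < n) (k : ℕ) :
    cycMat n ^ k = Matrix.of fun i j : Fin n => if (i : ℕ) = ((j : ℕ) + k) % n then 1 else 0 := by
  induction k with
  | zero =>
    ext i j
    simp [Matrix.one_apply, Nat.mod_eq_of_lt j.2, Fin.ext_iff]
  | succ k ih =>
    ext i j
    rw [pow_succ, ih, Matrix.mul_apply,
      Finset.sum_eq_single (⟨((j : ℕ) + 1) % n, Nat.mod_lt _ hn⟩ : Fin n)]
    · simp [cycMat, add_assoc, add_comm 1 k]
    · intro l _ hl
      have : ¬ ((l : ℕ) = ((j : ℕ) + 1) % n) := fun h => hl (Fin.ext h)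
      simp [cycMat, this]
    · simp

lemma cyc_pow_eq_one {n : ℕ} (hn : 0 < n) (k : ℕ) : cycMat n ^ k = 1 ↔ n ∣ k := by
  rw [cyc_pow hn]
  constructor
  · intro h
    have h1 := congrFun (congrFun h ⟨0, hn⟩) ⟨0, hn⟩
    simp only [Matrix.of_apply, Matrix.one_apply_eq, zero_add] at h1
    by_contra hk
    rw [if_neg] at h1
    · exact zero_ne_one h1
    · intro h2
      exact hk (Nat.dvd_of_mod_eq_zero h2.symm)
  · rintro ⟨c, rfl⟩
    ext i j
    simp [Matrix.one_apply, Nat.mod_eq_of_lt j.2, Fin.ext_iff]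

lemma cyc_order {n : ℕ} (hn : 0 < n) : orderOf (cycMat n) = n := by
  apply Nat.dvd_antisymm
  · rw [orderOf_dvd_iff_pow_eq_one, cyc_pow_eq_one hn]
  · rw [← cyc_pow_eq_one hn, pow_orderOf_eq_one]

lemma cyc_conj {n : ℕ} (hn : 0 < n) (s : ℕ) (d : Fin n → ℂ) :
    (cycMat n ^ s)⁻¹ * Matrix.diagonal d * cycMat n ^ s =
      Matrix.diagonal fun i : Fin n => d ⟨((i : ℕ) + s) % n, Nat.mod_lt _ hn⟩ := by
  have hu : IsUnit (cycMat n ^ s) := by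
    apply IsUnit.pow
    exact IsUnit.of_pow_eq_one ((cyc_pow_eq_one hn n).2 dvd_rfl) hn.ne'
  have hdet := (Matrix.isUnit_iff_isUnit_det _).1 hu
  have hcomm : Matrix.diagonal d * cycMat n ^ s = cycMat n ^ s *
      Matrix.diagonal fun i : Fin n => d ⟨((i : ℕ) + s) % n, Nat.mod_lt _ hn⟩ := by
    ext i j
    rw [Matrix.diagonal_mul, Matrix.mul_diagonal, cyc_pow hn]
    simp only [Matrix.of_apply]
    split_ifs with h
    · have : i = ⟨((j : ℕ) + s) % n, Nat.mod_lt _ hn⟩ := Fin.ext h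
      rw [mul_one, one_mul, ← this]
    · simp
  rw [mul_assoc, hcomm, ← mul_assoc, Matrix.nonsing_inv_mul _ hdet, one_mul]

lemma list_diag {n : ℕ} (g : ℕ → Fin n → ℂ) (m : ℕ) :
    ((List.range m).map fun t => Matrix.diagonal (g t)).prod =
      Matrix.diagonal fun i => ∏ t ∈ Finset.range m, g t i := by
  induction m with
  | zero => simp
  | succ m ih =>
    rw [List.range_succ, List.map_append, List.prod_append, ih]
    simp [Finset.prod_range_succ, Matrix.diagonal_mul_diagonal]

lemma prod_orbit {n : ℕ} (hn : 0 < n) (k : ℕ) (d : Fin n → ℂ) (i : Fin n) :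
    ∏ t ∈ Finset.range (n / n.gcd k), d ⟨((i : ℕ) + k * t) % n, Nat.mod_lt _ hn⟩ =
      ∏ j ∈ resid n (n.gcd k) ((i : ℕ) % n.gcd k), d j := by
  have hen : n.gcd k ∣ n := Nat.gcd_dvd_left n k
  have hek : n.gcd k ∣ k := Nat.gcd_dvd_right n k
  have hm : 0 < n / n.gcd k := Nat.div_pos (Nat.le_of_dvd hn hen) (Nat.pos_of_dvd_of_pos hen hn)
  refine Finset.prod_bij (fun t _ => ⟨((i : ℕ) + k * t) % n, Nat.mod_lt _ hn⟩) ?_ ?_ ?_ ?_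
  · intro t _
    simp only [Finset.mem_filter, Finset.mem_univ, true_and]
    rw [Nat.mod_mod_of_dvd _ hen]
    exact (Nat.modEq_iff_dvd' (by omega)).2 (by
      rw [Nat.add_sub_cancel_left]; exact hek.mul_right t) |>.symm
  · intro t ht u hu h
    have h1 : (i : ℕ) + k * t ≡ i + k * u [MOD n] := by
      exact Fin.ext_iff.1 h
    have h2 := Nat.ModEq.add_left_cancel' _ h1
    have h3 := Nat.ModEq.cancel_left_div_gcd hn h2
    exact Nat.ModEq.eq_of_lt_of_lt h3 (Finset.mem_range.1 ht) (Finset.mem_range.1 hu)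
  · intro j hj
    simp only [Finset.mem_filter, Finset.mem_univ, true_and] at hj
    have hj' : (i : ℕ) ≡ j [MOD n.gcd k] := hj.symm
    obtain ⟨c, hc⟩ := (Nat.modEq_iff_dvd.1 hj')
    have hb := Nat.gcd_eq_gcd_ab n k
    set A := n.gcdA k
    set B := n.gcdB k
    have hm' : (0 : ℤ) < ((n / n.gcd k : ℕ) : ℤ) := by exact_mod_cast hm
    have hnn := Int.emod_nonneg (B * c) hm'.ne'
    have hlt := Int.emod_lt_of_pos (B * c) hm'
    have hdm := Int.emod_add_mul_ediv (B * c) ((n / n.gcd k : ℕ) : ℤ)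
    set q := B * c / ((n / n.gcd k : ℕ) : ℤ)
    obtain ⟨t, ht⟩ := Int.eq_ofNat_of_zero_le hnn
    rw [ht] at hlt hdm
    refine ⟨t, Finset.mem_range.2 (by exact_mod_cast hlt), ?_⟩
    apply Fin.ext
    change ((i : ℕ) + k * t) % n = j
    have h1 : (i : ℕ) + k * t ≡ j [MOD n] := by
      rw [Nat.modEq_iff_dvd]
      obtain ⟨k', hk'⟩ := hek
      have hn' : ((n.gcd k : ℕ) : ℤ) * ((n / n.gcd k : ℕ) : ℤ) = n := by
        exact_mod_cast Nat.mul_div_cancel' hen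
      have hkk : (k : ℤ) = (n.gcd k : ℤ) * k' := by exact_mod_cast hk'
      refine ⟨A * c + k' * q, ?_⟩
      push_cast
      have e1 : (j : ℤ) - i = (n * A + k * B) * c := by rw [← hb]; exact hc
      have e2 : (k : ℤ) * (n / n.gcd k : ℕ) = n * k' := by
        rw [← hn']
        conv_lhs => rw [hkk]
        ring
      linear_combination e1 - (k : ℤ) * hdm + q * e2
    have h2 : ((i : ℕ) + k * t) % n = (j : ℕ) % n := h1
    rw [h2, Nat.mod_eq_of_lt j.2]
  · intro t _
    rfl

lemma avg_cyc {n : ℕ} (hn : 0 < n) (k : ℕ) (d : Fin n → ℂ) :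
    avgMat (cycMat n ^ k) (Matrix.diagonal d) =
      Matrix.diagonal fun i : Fin n => ∏ j ∈ resid n (n.gcd k) ((i : ℕ) % n.gcd k), d j := by
  have hfin : IsOfFinOrder (cycMat n) :=
    isOfFinOrder_iff_pow_eq_one.2 ⟨n, hn, (cyc_pow_eq_one hn n).2 dvd_rfl⟩
  have ho : orderOf (cycMat n ^ k) = n / n.gcd k := by
    rw [hfin.orderOf_pow, cyc_order hn]
  unfold avgMat
  rw [ho]
  simp only [← pow_mul, cyc_conj hn]
  rw [list_diag]
  simp only [prod_orbit hn]

lemma mem_plus_iff {n : ℕ} (hn : 1 < n) (d : Fin n → ℂ) (hd : ∀ i, d i = 1 ∨ d i = -1) :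
    Matrix.diagonal d ∈ JsetPlus (cycSet n) ↔
      ∀ e, e ∣ n → e < n → ∀ r < e, ∏ i ∈ resid n e r, d i = 1 := by
  have hn0 : 0 < n := by omega
  constructor
  · rintro ⟨⟨_, h⟩, hdet⟩ e he hlt r hr
    have h1 := h (cycMat n ^ e) ⟨e, rfl⟩ (by
      rw [Ne, cyc_pow_eq_one hn0]
      intro h2
      have := Nat.le_of_dvd (Nat.pos_of_dvd_of_pos he hn0) h2
      omega)
    rw [hdet, one_smul, avg_cyc hn0, Nat.gcd_eq_right he] at h1
    have h2 := congrFun (congrFun h1 ⟨r, by omega⟩) ⟨r, by omega⟩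
    simpa [Matrix.diagonal_apply_eq, Nat.mod_eq_of_lt hr] using h2
  · intro h
    have hdet : (Matrix.diagonal d).det = 1 := by
      have h1 := h 1 (one_dvd _) hn 0 one_pos
      rw [Matrix.det_diagonal, ← h1]
      apply Finset.prod_congr _ (fun _ _ => rfl)
      ext i
      simp [Nat.mod_one]
    refine ⟨⟨⟨d, hd, rfl⟩, ?_⟩, hdet⟩
    rintro G ⟨k, rfl⟩ hG
    rw [Ne, cyc_pow_eq_one hn0] at hG
    rw [hdet, one_smul, avg_cyc hn0, ← Matrix.diagonal_one]
    congr 1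
    funext i
    have hen : n.gcd k ∣ n := Nat.gcd_dvd_left n k
    apply h _ hen _ _ (Nat.mod_lt _ (Nat.pos_of_dvd_of_pos hen hn0))
    apply lt_of_le_of_ne (Nat.le_of_dvd hn0 hen)
    intro h2
    exact hG (Nat.gcd_eq_left_iff_dvd.1 h2)

/-- Sign attached to a residue mod 2. -/
def sgn2 (z : ZMod 2) : ℂ := if z = 0 then 1 else -1

lemma sgn2_add (x y : ZMod 2) : sgn2 (x + y) = sgn2 x * sgn2 y := by
  have h2 : ∀ z : ZMod 2, z = 0 ∨ z = 1 := by decide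
  have h11 : (1 + 1 : ZMod 2) = 0 := by decide
  rcases h2 x with rfl | rfl <;> rcases h2 y with rfl | rfl <;> simp [sgn2, h11]

lemma sgn2_eq_one (x : ZMod 2) : sgn2 x = 1 ↔ x = 0 := by
  unfold sgn2
  split_ifs with h
  · simp [h]
  · simp only [h, iff_false]
    norm_num

lemma sgn2_sum {ι : Type*} (s : Finset ι) (a : ι → ZMod 2) :
    ∏ i ∈ s, sgn2 (a i) = sgn2 (∑ i ∈ s, a i) := by
  induction s using Finset.induction_on with
  | empty => simp [sgn2]
  | insert x s hx ih => rw [Finset.prod_insert hx, Finset.sum_insert hx, sgn2_add, ih]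

lemma sgn2_inj : Function.Injective sgn2 := by
  intro x y h
  have h2 : ∀ z : ZMod 2, z = 0 ∨ z = 1 := by decide
  rcases h2 x with rfl | rfl <;> rcases h2 y with rfl | rfl <;> first | rfl | (norm_num [sgn2] at h)

/-- `|J_n^+| = 2^{φ(n)}` for every `n > 1`. -/
theorem stmt10 {n : ℕ} (hn : 1 < n) :
    (JsetPlus (cycSet n)).ncard = 2 ^ Nat.totient n := by
  rw [← aux_count (by omega : 0 < n)]
  have hpm : ∀ z, sgn2 z = 1 ∨ sgn2 z = -1 := by
    intro z
    unfold sgn2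
    split_ifs <;> simp
  have hinj : Function.Injective
      (fun a : Fin n → ZMod 2 => (Matrix.diagonal fun i => sgn2 (a i) : Mat n)) := by
    intro a b h
    have h1 := Matrix.diagonal_injective h
    funext i
    exact sgn2_inj (congrFun h1 i)
  rw [← Set.ncard_image_of_injective _ hinj]
  congr 1
  ext J
  constructor
  · intro hJ
    obtain ⟨d, hd, rfl⟩ := hJ.1.1
    have hda : ∃ a : Fin n → ZMod 2, d = fun i => sgn2 (a i) := by
      refine ⟨fun i => if d i = 1 then 0 else 1, ?_⟩
      funext i
      rcases hd i with h | h
      · simp [h, sgn2]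
      · have : ¬ ((-1 : ℂ) = 1) := by norm_num
        simp [h, sgn2, this]
    obtain ⟨a, rfl⟩ := hda
    rw [mem_plus_iff hn _ hd] at hJ
    refine ⟨a, ?_, rfl⟩
    intro e he hlt r hr
    rw [← sgn2_eq_one, ← sgn2_sum]
    exact hJ e he hlt r hr
  · rintro ⟨a, ha, rfl⟩
    refine (mem_plus_iff hn _ (fun i => hpm (a i))).2 ?_
    intro e he hlt r hr
    rw [sgn2_sum, sgn2_eq_one]
    exact ha e he hlt r hr
end

section
/- Let n > 1 be odd. Then the groups of signed diagonal matrices J_n^+ and J_n are not scalar, i.e., each contains a matrix that is not a scalar multiple of the identity. -/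
open Matrix BigOperators
open scoped Classical

theorem aux_exists_char (n : ℕ) (hodd : Odd n) (hn : 1 < n) :
    ∃ (K : Type) (_ : Field K) (z : K) (s : K → ℂ), IsPrimitiveRoot z n ∧ s 1 = -1 ∧
      (∀ x y, s (x + y) = s x * s y) ∧ (∀ x, s x = 1 ∨ s x = -1) := by
  have : NeZero n := ⟨by omega⟩
  have : NeZero (n : AlgebraicClosure (ZMod 2)) := by
    refine ⟨fun h => ?_⟩
    rw [CharP.cast_eq_zero_iff (AlgebraicClosure (ZMod 2)) 2] at h
    rcases hodd with ⟨k, hk⟩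
    omega
  obtain ⟨z, hz⟩ := HasEnoughRootsOfUnity.exists_primitiveRoot (AlgebraicClosure (ZMod 2)) n
  have hf1 : ∃ f : AlgebraicClosure (ZMod 2) →ₗ[ZMod 2] ZMod 2, f 1 ≠ 0 := by
    by_contra! h
    exact one_ne_zero ((Module.forall_dual_apply_eq_zero_iff (ZMod 2) _).1 h)
  obtain ⟨f, hf⟩ := hf1
  refine ⟨_, inferInstance, z, fun x => if f x = 0 then 1 else -1, hz, by simp [hf], ?_, ?_⟩
  · intro x y
    have key : ∀ a b : ZMod 2, (if a + b = 0 then (1 : ℂ) else -1) =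
        (if a = 0 then 1 else -1) * (if b = 0 then 1 else -1) := by
      intro a b
      have h : ∀ a b : ZMod 2, (a = 0 ∧ b = 0 ∧ a + b = 0) ∨ (a = 0 ∧ b ≠ 0 ∧ a + b ≠ 0) ∨
        (a ≠ 0 ∧ b = 0 ∧ a + b ≠ 0) ∨ (a ≠ 0 ∧ b ≠ 0 ∧ a + b = 0) := by decide
      rcases h a b with h | h | h | h <;> obtain ⟨h1, h2, h3⟩ := h <;>
        simp only [h1, h2, h3, if_true, if_false] <;> simp [h1, h2]
    simp only [map_add]
    exact key _ _
  · intro x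
    by_cases h : f x = 0 <;> simp [h]

theorem aux_cyc_pow (n k : ℕ) (hn : 1 < n) :
    cycMat n ^ k = Matrix.of fun i j : Fin n => if (i : ℕ) = ((j : ℕ) + k) % n then (1 : ℂ) else 0 := by
  induction k with
  | zero =>
    ext i j
    simp [Matrix.one_apply, Nat.mod_eq_of_lt j.2, Fin.ext_iff]
  | succ k ih =>
    ext i j
    rw [pow_succ, ih, Matrix.mul_apply]
    rw [Finset.sum_eq_single (⟨((j : ℕ) + 1) % n, Nat.mod_lt _ (by omega)⟩ : Fin n)]
    · simp [cycMat, add_assoc, add_comm 1 k]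
    · intro b _ hb
      have : ¬ ((b : ℕ) = ((j : ℕ) + 1) % n) := fun h => hb (Fin.ext h)
      simp [cycMat, this]
    · simp

theorem aux_cyc_pow_eq_one (n k : ℕ) (hn : 1 < n) : cycMat n ^ k = 1 ↔ n ∣ k := by
  rw [aux_cyc_pow n k hn]
  constructor
  · intro h
    have := congrFun (congrFun h ⟨0, by omega⟩) ⟨0, by omega⟩
    simp only [Matrix.of_apply, Matrix.one_apply_eq, zero_add] at this
    by_contra hk
    rw [if_neg (fun h => hk (Nat.dvd_of_mod_eq_zero h.symm))] at this
    exact zero_ne_one this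
  · rintro ⟨c, rfl⟩
    ext i j
    simp [Matrix.one_apply, Nat.mod_eq_of_lt j.2, Fin.ext_iff]

theorem aux_main {n : ℕ} (hodd : Odd n) (hn : 1 < n) :
    ∃ J ∈ JsetPlus (cycSet n), ∀ c : ℂ, J ≠ c • (1 : Mat n) := by
  obtain ⟨K, _, z, s, hz, hs1, hadd, hpm⟩ := aux_exists_char n hodd hn
  have hs0 : s 0 = 1 := by
    have h := hadd 0 1
    rw [zero_add, hs1] at h
    linear_combination h
  let D : K → Mat n := fun a => Matrix.diagonal fun i : Fin n => s (a * z ^ (i : ℕ))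
  have hD0 : D 0 = 1 := by simp [D, hs0]
  have hDadd : ∀ a b, D a * D b = D (a + b) := by
    intro a b
    simp [D, Matrix.diagonal_mul_diagonal, add_mul, hadd]
  have hcomm : ∀ a, D a * cycMat n = cycMat n * D (a * z) := by
    intro a
    ext i j
    simp only [D, Matrix.diagonal_mul, Matrix.mul_diagonal, cycMat, Matrix.of_apply]
    split_ifs with h
    · have : z ^ (i : ℕ) = z * z ^ (j : ℕ) := by
        rw [h, ← pow_succ', ← pow_eq_pow_mod _ hz.pow_eq_one]
      rw [this, mul_assoc, mul_one, one_mul]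
    · simp
  have hcommk : ∀ k a, D a * cycMat n ^ k = cycMat n ^ k * D (a * z ^ k) := by
    intro k
    induction k with
    | zero => simp
    | succ k ih =>
      intro a
      rw [pow_succ, ← mul_assoc, ih, mul_assoc, hcomm, ← mul_assoc, pow_succ, mul_assoc a]
  have hCn : cycMat n ^ n = 1 := (aux_cyc_pow_eq_one n n hn).2 dvd_rfl
  have hCu : IsUnit (cycMat n) := IsUnit.of_pow_eq_one hCn (by omega)
  have hconj : ∀ k a, (cycMat n ^ k)⁻¹ * D a * cycMat n ^ k = D (a * z ^ k) := by
    intro k a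
    rw [mul_assoc, hcommk, ← mul_assoc, Matrix.nonsing_inv_mul, one_mul]
    exact (Matrix.isUnit_iff_isUnit_det _).1 (hCu.pow k)
  have hprod : ∀ k m, ((List.range m).map fun l =>
      ((cycMat n ^ k) ^ l)⁻¹ * D 1 * (cycMat n ^ k) ^ l).prod =
      D (∑ l ∈ Finset.range m, (z ^ k) ^ l) := by
    intro k m
    induction m with
    | zero => simp [hD0]
    | succ m ih =>
      rw [List.range_succ, List.map_append, List.prod_append, ih, Finset.sum_range_succ, ← hDadd]
      simp only [List.map_cons, List.map_nil, List.prod_singleton]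
      rw [← pow_mul, hconj, one_mul, pow_mul]
  have hssum : ∀ (t : Finset (Fin n)) (g : Fin n → K), s (∑ i ∈ t, g i) = ∏ i ∈ t, s (g i) := by
    intro t g
    induction t using Finset.induction_on with
    | empty => simp [hs0]
    | insert a t ha ih => rw [Finset.sum_insert ha, Finset.prod_insert ha, hadd, ih]
  have hdet : (D 1).det = 1 := by
    simp only [D, Matrix.det_diagonal, one_mul]
    rw [← hssum, Fin.sum_univ_eq_sum_range (fun i => z ^ i), hz.geom_sum_eq_zero hn, hs0]
  refine ⟨D 1, ⟨⟨⟨_, fun i => hpm _, rfl⟩, ?_⟩, hdet⟩, ?_⟩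
  · rintro G ⟨k, rfl⟩ hG
    rw [hdet, one_smul, avgMat, hprod]
    have hzk : z ^ k ≠ 1 := fun h =>
      hG ((aux_cyc_pow_eq_one n k hn).2 ((hz.pow_eq_one_iff_dvd k).1 h))
    have h1 : (z ^ k) ^ orderOf (cycMat n ^ k) = 1 := by
      rw [← pow_mul, hz.pow_eq_one_iff_dvd, ← aux_cyc_pow_eq_one n _ hn, pow_mul]
      exact pow_orderOf_eq_one _
    rw [geom_sum_eq hzk, h1, sub_self, zero_div, hD0]
  · intro c hc
    have h0 := congrFun (congrFun hc ⟨0, by omega⟩) ⟨0, by omega⟩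
    simp [D, hs1] at h0
    rw [hc, ← h0, Matrix.det_smul, Matrix.det_one, Fintype.card_fin, hodd.neg_one_pow] at hdet
    norm_num at hdet

/-- For odd `n > 1`, the groups `J_n^+` and `J_n` are not scalar. -/
theorem stmt11 {n : ℕ} (hodd : Odd n) (hn : 1 < n) :
    (∃ J ∈ JsetPlus (cycSet n), ∀ c : ℂ, J ≠ c • (1 : Mat n)) ∧
    (∃ J ∈ Jset (cycSet n), ∀ c : ℂ, J ≠ c • (1 : Mat n)) := by
  obtain ⟨J, hJ, h⟩ := aux_main hodd hn
  exact ⟨⟨J, hJ, h⟩, ⟨J, hJ.1, h⟩⟩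
end

section
/- Let G ⊆ M_n(ℂ) be an irreducible group of matrices. If the commutator subgroup [G,G] is diagonalizable (i.e., simultaneously similar to a group of diagonal matrices), then G is simultaneously similar to a group of monomial matrices with commutative pattern. -/
open Matrix BigOperators
open scoped Classical

theorem aux_joint {n : ℕ} (S : Set (Mat n)) (hS : ∀ a ∈ S, ∀ b ∈ S, a * b = b * a) (d : ℕ) :
    ∀ W : Submodule ℂ (Fin n → ℂ), Module.finrank ℂ W = d → W ≠ ⊥ →
      (∀ a ∈ S, ∀ v ∈ W, a *ᵥ v ∈ W) →
      ∃ v : Fin n → ℂ, v ≠ 0 ∧ ∃ χ : Mat n → ℂ, ∀ a ∈ S, a *ᵥ v = χ a • v := by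
  induction d using Nat.strong_induction_on with
  | _ d ih =>
    intro W hd hW hinv
    by_cases hsc : ∀ a ∈ S, ∃ c : ℂ, ∀ v ∈ W, a *ᵥ v = c • v
    · obtain ⟨v, hv, hv0⟩ := W.exists_mem_ne_zero_of_ne_bot hW
      choose! χ hχ using hsc
      exact ⟨v, hv0, χ, fun a ha => hχ a ha v hv⟩
    · push Not at hsc
      obtain ⟨a, ha, hna⟩ := hsc
      have : Nontrivial W := (Submodule.nontrivial_iff_ne_bot).2 hW
      let f : Module.End ℂ W := (Matrix.mulVecLin a).restrict (fun v hv => hinv a ha v hv)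
      obtain ⟨c, hc⟩ := Module.End.exists_eigenvalue f
      obtain ⟨w, hw⟩ := hc.exists_hasEigenvector
      have hw1 : a *ᵥ (w : Fin n → ℂ) = c • (w : Fin n → ℂ) := by
        have := congrArg Subtype.val hw.apply_eq_smul
        exact this
      let W' : Submodule ℂ (Fin n → ℂ) := W ⊓ LinearMap.ker (Matrix.mulVecLin a - c • LinearMap.id)
      have hmem : ∀ x, x ∈ W' ↔ x ∈ W ∧ a *ᵥ x = c • x := by
        intro x
        simp [W', sub_eq_zero]
      have hlt : W' < W := by
        refine lt_of_le_of_ne inf_le_left ?_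
        intro h
        obtain ⟨v, hv, hne⟩ := hna c
        rw [← h] at hv
        exact hne ((hmem v).1 hv).2
      refine ih (Module.finrank ℂ W') (hd ▸ Submodule.finrank_lt_finrank_of_lt hlt) W' rfl ?_ ?_
      · intro h
        have : (w : Fin n → ℂ) ∈ W' := (hmem _).2 ⟨w.2, hw1⟩
        rw [h] at this
        exact hw.2 (by simpa using this)
      · intro b hb v hv
        obtain ⟨h1, h2⟩ := (hmem v).1 hv
        refine (hmem _).2 ⟨hinv b hb v h1, ?_⟩
        rw [Matrix.mulVec_mulVec, hS a ha b hb, ← Matrix.mulVec_mulVec, h2, Matrix.mulVec_smul]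

theorem aux_max {H : Type*} [Group H] (G : Subgroup H)
    (hc : ∀ a ∈ ⁅G, G⁆, ∀ b ∈ ⁅G, G⁆, a * b = b * a) :
    ∃ S : Set H, ((⁅G, G⁆ : Subgroup H) : Set H) ⊆ S ∧ S ⊆ G ∧ (∀ a ∈ S, ∀ b ∈ S, a * b = b * a) ∧
      ∀ g ∈ G, (∀ a ∈ S, g * a = a * g) → g ∈ S := by
  obtain ⟨S, hS, hmax⟩ := zorn_subset_nonempty
    {S : Set H | S ⊆ G ∧ ∀ a ∈ S, ∀ b ∈ S, a * b = b * a} (by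
      intro c hcS hch hne
      refine ⟨⋃₀ c, ⟨Set.sUnion_subset fun s hs => (hcS hs).1, ?_⟩,
        fun s hs => Set.subset_sUnion_of_mem hs⟩
      rintro a ⟨s, hs, has⟩ b ⟨t, ht, hbt⟩
      rcases hch.total hs ht with h | h
      · exact (hcS ht).2 a (h has) b hbt
      · exact (hcS hs).2 a has b (h hbt)) ((⁅G, G⁆ : Subgroup H) : Set H)
      ⟨Subgroup.commutator_le_self G, hc⟩
  refine ⟨S, hS, hmax.prop.1, hmax.prop.2, fun g hg h => ?_⟩
  have : insert g S ∈ {S : Set H | S ⊆ G ∧ ∀ a ∈ S, ∀ b ∈ S, a * b = b * a} := by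
    refine ⟨Set.insert_subset hg hmax.prop.1, ?_⟩
    rintro a (rfl | ha) b (rfl | hb)
    · rfl
    · exact h b hb
    · exact (h a ha).symm
    · exact hmax.prop.2 a ha b hb
  exact hmax.le_of_ge this (Set.subset_insert g S) (Set.mem_insert g S)

/-- From a basis permuted projectively by `G` to a monomial form. -/
theorem aux_final {n : ℕ} (G : Subgroup (Mat n)ˣ) (b : Module.Basis (Fin n) ℂ (Fin n → ℂ))
    (hperm : ∀ g ∈ G, ∀ j, ∃ i, ∃ c : ℂ, c ≠ 0 ∧ (g : Mat n) *ᵥ b j = c • b i)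
    (hcomm : ∀ g ∈ G, ∀ h ∈ G, ∀ j, ∃ c : ℂ, 
      ((g * h : (Mat n)ˣ) : Mat n) *ᵥ b j = c • (((h * g : (Mat n)ˣ) : Mat n) *ᵥ b j)) :
    ∃ T : Mat n, IsUnit T ∧
      (∀ A ∈ G, IsMonomialMat (T⁻¹ * (A : Mat n) * T)) ∧
      ∀ A ∈ G, ∀ B ∈ G,
        patMat (T⁻¹ * (A : Mat n) * T) * patMat (T⁻¹ * (B : Mat n) * T) =
          patMat (T⁻¹ * (B : Mat n) * T) * patMat (T⁻¹ * (A : Mat n) * T) := by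
  choose! σ c hc0 hc using hperm
  have hbinj : ∀ i j (x y : ℂ), x ≠ 0 → x • b i = y • b j → i = j := by
    intro i j x y hx h
    by_contra hne
    have := congrArg (fun v => b.repr v i) h
    simp [Finsupp.single_apply, Ne.symm hne] at this
    exact hx this
  have hinj : ∀ g ∈ G, Function.Injective (σ g) := by
    intro g hg i j hij
    have h1 := hc g hg i
    have h2 := hc g hg j
    rw [← hij] at h2
    refine hbinj i j (c g j) (c g i) (hc0 g hg j) ?_
    have : (g : Mat n) *ᵥ (c g j • b i) = (g : Mat n) *ᵥ (c g i • b j) := by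
      rw [Matrix.mulVec_smul, Matrix.mulVec_smul, h1, h2, smul_smul, smul_smul, mul_comm]
    exact (Matrix.mulVec_injective_of_isUnit g.isUnit) this
  let T : Mat n := Matrix.of fun i j => b j i
  have hT : IsUnit T := by
    rw [← Matrix.linearIndependent_cols_iff_isUnit]
    exact b.linearIndependent
  have hTd : IsUnit T.det := (Matrix.isUnit_iff_isUnit_det T).1 hT
  let N : (Mat n)ˣ → Mat n := fun g => Matrix.of fun i j => if i = σ g j then c g j else 0
  have hN : ∀ g ∈ G, T⁻¹ * (g : Mat n) * T = N g := by
    intro g hg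
    have : (g : Mat n) * T = T * N g := by
      ext i j
      have := congrFun (hc g hg j) i
      simp only [Matrix.mul_apply, N, T, Matrix.of_apply, mul_ite, mul_zero, Finset.sum_ite_eq',
        Finset.mem_univ, if_true]
      simp only [Matrix.mulVec, dotProduct, Pi.smul_apply, smul_eq_mul] at this
      rw [this, mul_comm]
    rw [Matrix.mul_assoc, this, ← Matrix.mul_assoc, Matrix.nonsing_inv_mul _ hTd, Matrix.one_mul]
  have hNne : ∀ g ∈ G, ∀ i j, N g i j ≠ 0 ↔ i = σ g j := by
    intro g hg i j
    simp [N, hc0 g hg j]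
  have hpat : ∀ g ∈ G, patMat (N g) = Matrix.of fun i j => if i = σ g j then (1 : ℂ) else 0 := by
    intro g hg
    ext i j
    have := hNne g hg i j
    simp only [patMat, Matrix.of_apply]
    by_cases h : i = σ g j
    · rw [if_neg (this.2 h), if_pos h]
    · rw [if_neg h, if_pos (by by_contra h'; exact h (this.1 h'))]
  refine ⟨T, hT, fun g hg => ?_, fun g hg h hh => ?_⟩
  · rw [hN g hg]
    refine ⟨fun i => ?_, fun j => ?_⟩
    · obtain ⟨j, rfl⟩ := (Finite.injective_iff_surjective.1 (hinj g hg)) i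
      refine ⟨j, (hNne g hg _ _).2 rfl, fun k hk => ?_⟩
      exact (hinj g hg ((hNne g hg _ _).1 hk)).symm
    · exact ⟨σ g j, (hNne g hg _ _).2 rfl, fun k hk => (hNne g hg _ _).1 hk⟩
  · rw [hN g hg, hN h hh, hpat g hg, hpat h hh]
    have key : ∀ j, σ g (σ h j) = σ h (σ g j) := by
      intro j
      obtain ⟨d, hd⟩ := hcomm g hg h hh j
      simp only [Units.val_mul, ← Matrix.mulVec_mulVec, hc g hg, hc h hh, Matrix.mulVec_smul,
        smul_smul] at hd
      exact hbinj _ _ _ _ (mul_ne_zero (hc0 h hh _) (hc0 g hg _)) hd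
    ext i j
    simp [Matrix.mul_apply, key]

theorem aux_main_s13 {n : ℕ} (G : Subgroup (Mat n)ˣ)
    (hirr : IrreducibleSet ((fun u : (Mat n)ˣ => (u : Mat n)) '' G))
    (hn : n ≠ 0)
    (hcc : ∀ a ∈ ⁅G, G⁆, ∀ b ∈ ⁅G, G⁆, a * b = b * a) :
    ∃ b : Module.Basis (Fin n) ℂ (Fin n → ℂ),
    (∀ g ∈ G, ∀ j, ∃ i, ∃ c : ℂ, c ≠ 0 ∧ (g : Mat n) *ᵥ b j = c • b i) ∧
    (∀ g ∈ G, ∀ h ∈ G, ∀ j, ∃ c : ℂ, 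
      ((g * h : (Mat n)ˣ) : Mat n) *ᵥ b j = c • (((h * g : (Mat n)ˣ) : Mat n) *ᵥ b j)) := by
  obtain ⟨S, hGS, hSG, hSc, hSmax⟩ := aux_max G hcc
  -- conjugation invariance
  have hconj : ∀ g ∈ G, ∀ a ∈ S, g⁻¹ * a * g ∈ S := by
    intro g hg a ha
    have h1 : g⁻¹ * a * g * a⁻¹ ∈ ⁅G, G⁆ := by
      have := Subgroup.commutator_mem_commutator (G.inv_mem hg) (hSG ha)
      simpa [commutatorElement_def] using this
    refine hSmax _ (G.mul_mem (G.mul_mem (G.inv_mem hg) (hSG ha)) hg) fun b hb => ?_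
    have e : g⁻¹ * a * g = (g⁻¹ * a * g * a⁻¹) * a := by group
    rw [e, mul_assoc, hSc a ha b hb, ← mul_assoc, hSc _ (hGS h1) b hb, mul_assoc]
  obtain ⟨v, hv0, χ, hχ⟩ : ∃ v : Fin n → ℂ, v ≠ 0 ∧ ∃ χ : Mat n → ℂ,
      ∀ a ∈ S, (a : Mat n) *ᵥ v = χ a • v := by
    obtain ⟨v, hv, χ, h⟩ := aux_joint ((fun u : (Mat n)ˣ => (u : Mat n)) '' S) (by
      rintro _ ⟨a, ha, rfl⟩ _ ⟨b, hb, rfl⟩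
      exact congrArg Units.val (hSc a ha b hb)) _ ⊤ rfl (by
        have : Nonempty (Fin n) := ⟨⟨0, Nat.pos_of_ne_zero hn⟩⟩
        exact top_ne_bot) (fun _ _ _ _ => trivial)
    exact ⟨v, hv, χ, fun a ha => h _ ⟨a, ha, rfl⟩⟩
  -- the weight of `g v`
  let w : (Mat n)ˣ → (Mat n)ˣ → ℂ := fun g a => χ ((g⁻¹ * a * g : (Mat n)ˣ) : Mat n)
  have hw : ∀ g ∈ G, ∀ a ∈ S, (a : Mat n) *ᵥ ((g : Mat n) *ᵥ v) = w g a • ((g : Mat n) *ᵥ v) := by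
    intro g hg a ha
    have h1 := hχ _ (hconj g hg a ha)
    have : a * g = g * (g⁻¹ * a * g) := by group
    rw [Matrix.mulVec_mulVec, ← Units.val_mul, this, Units.val_mul, ← Matrix.mulVec_mulVec, h1,
      Matrix.mulVec_smul]
  have hne : ∀ g : (Mat n)ˣ, (g : Mat n) *ᵥ v ≠ 0 := by
    intro g h
    exact hv0 (Matrix.mulVec_injective_of_isUnit g.isUnit (by simpa using h))
  have hspan : Submodule.span ℂ ((fun g : (Mat n)ˣ => (g : Mat n) *ᵥ v) '' G) = ⊤ := by
    refine (hirr _ ?_).resolve_left ?_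
    · rintro _ ⟨g, hg, rfl⟩ x hx
      induction hx using Submodule.span_induction with
      | mem x hx =>
        obtain ⟨h, hh, rfl⟩ := hx
        refine Submodule.subset_span ⟨g * h, G.mul_mem hg hh, ?_⟩
        simp [Matrix.mulVec_mulVec]
      | zero => simp
      | add x y _ _ hx hy => rw [Matrix.mulVec_add]; exact Submodule.add_mem _ hx hy
      | smul c x _ hx => rw [Matrix.mulVec_smul]; exact Submodule.smul_mem _ _ hx
    · intro h
      have : (1 : Mat n) *ᵥ v ∈ Submodule.span ℂ ((fun g : (Mat n)ˣ => (g : Mat n) *ᵥ v) '' G) :=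
        Submodule.subset_span ⟨1, G.one_mem, rfl⟩
      rw [h] at this
      exact hv0 (by simpa using this)
  -- commuting up to scalars on the orbit
  have hcs : ∀ g ∈ G, ∀ h ∈ G, ∀ x ∈ G, ∃ c : ℂ, ((g * h : (Mat n)ˣ) : Mat n) *ᵥ ((x : Mat n) *ᵥ v)
      = c • (((h * g : (Mat n)ˣ) : Mat n) *ᵥ ((x : Mat n) *ᵥ v)) := by
    intro g hg h hh x hx
    have h1 : g⁻¹ * h⁻¹ * g * h ∈ S := by
      have := Subgroup.commutator_mem_commutator (G.inv_mem hg) (G.inv_mem hh)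
      exact hGS (by simpa [commutatorElement_def] using this)
    have e : g * h = (h * g) * (g⁻¹ * h⁻¹ * g * h) := by group
    refine ⟨w x (g⁻¹ * h⁻¹ * g * h), ?_⟩
    rw [e, Units.val_mul, ← Matrix.mulVec_mulVec, hw x hx _ h1, Matrix.mulVec_smul]
  -- same weight implies proportional
  have hstab : ∀ k ∈ G, (∀ a ∈ S, w k a = χ a) → k ∈ S := by
    intro k hk hwk
    refine hSmax k hk fun a ha => ?_
    apply Units.ext
    have key : Matrix.mulVecLin ((k * a : (Mat n)ˣ) : Mat n)
        = Matrix.mulVecLin ((a * k : (Mat n)ˣ) : Mat n) := by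
      refine LinearMap.ext_on hspan ?_
      rintro _ ⟨x, hx, rfl⟩
      simp only [Matrix.mulVecLin_apply]
      obtain ⟨c, hc⟩ := hcs k hk x hx 1 G.one_mem
      simp only [Units.val_one, Matrix.one_mulVec] at hc
      have h1 := hw (x * k) (G.mul_mem hx hk) a ha
      have h2 : w (x * k) a = w x a := by
        have := hwk _ (hconj x hx a ha)
        simp only [w] at this ⊢
        rw [← this]
        congr 2
        group
      rw [Units.val_mul, Units.val_mul, ← Matrix.mulVec_mulVec, hw x hx a ha, Matrix.mulVec_smul,
        ← Matrix.mulVec_mulVec, Matrix.mulVec_mulVec _ (k : Mat n) (x : Mat n), ← Units.val_mul, hc,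
        Matrix.mulVec_smul, h1, h2, smul_comm]
    exact Matrix.toLin'.injective key
  have hprop : ∀ g ∈ G, ∀ h ∈ G, (∀ a ∈ S, w g a = w h a) →
      ∃ c : ℂ, (g : Mat n) *ᵥ v = c • ((h : Mat n) *ᵥ v) := by
    intro g hg h hh hgh
    have hk : h⁻¹ * g ∈ S := by
      refine hstab _ (G.mul_mem (G.inv_mem hh) hg) fun a ha => ?_
      have := hgh (h * a * h⁻¹) (by simpa using hconj h⁻¹ (G.inv_mem hh) a ha)
      simp only [w] at this ⊢
      have e1 : (h⁻¹ * g)⁻¹ * a * (h⁻¹ * g) = g⁻¹ * (h * a * h⁻¹) * g := by group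
      have e2 : h⁻¹ * (h * a * h⁻¹) * h = a := by group
      rw [e1, this, e2]
    refine ⟨χ ((h⁻¹ * g : (Mat n)ˣ) : Mat n), ?_⟩
    have e : g = h * (h⁻¹ * g) := by group
    conv_lhs => rw [e, Units.val_mul, ← Matrix.mulVec_mulVec, hχ _ hk, Matrix.mulVec_smul]
  -- extract the basis
  obtain ⟨b, hb⟩ : ∃ b : Module.Basis (Fin n) ℂ (Fin n → ℂ),
      ∀ j, ∃ g ∈ G, (g : Mat n) *ᵥ v = b j := by
    let b0 := Module.Basis.ofSpan hspan.ge
    have hfin := Module.Finite.finite_basis b0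
    let b1 := b0.reindex ((b0.indexEquiv (Pi.basisFun ℂ (Fin n))))
    refine ⟨b1, fun j => ?_⟩
    have : b1 j ∈ Set.range b0 := by simp [b1]
    obtain ⟨g, hg, h⟩ := Module.Basis.ofSpan_subset hspan.ge this
    exact ⟨g, hg, h⟩
  choose γ hγ hγb using hb
  refine ⟨b, fun g hg j => ?_, fun g hg h hh j => ?_⟩
  · have hG := G.mul_mem hg (hγ j)
    have e : (g : Mat n) *ᵥ b j = ((g * γ j : (Mat n)ˣ) : Mat n) *ᵥ v := by
      rw [← hγb j, Matrix.mulVec_mulVec, Units.val_mul]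
    obtain ⟨i, hi⟩ : ∃ i, b.repr ((g : Mat n) *ᵥ b j) i ≠ 0 := by
      by_contra hcon
      push Not at hcon
      apply hne (g * γ j)
      rw [← e]
      apply b.repr.injective
      ext i
      simpa using hcon i
    have hpe : ∀ a ∈ S, w (g * γ j) a = w (γ i) a := by
      intro a ha
      have h1 := hw _ hG a ha
      rw [← e] at h1
      -- apply the matrix to the coordinates
      have h2 : ∀ x, b.repr ((a : Mat n) *ᵥ x) i = w (γ i) a * b.repr x i := by
        intro x
        have : (b.coord i) ∘ₗ (Matrix.mulVecLin (a : Mat n)) = w (γ i) a • b.coord i := by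
          refine b.ext fun l => ?_
          have := hw _ (hγ l) a ha
          rw [hγb] at this
          by_cases hl : l = i
          · subst hl
            simp [this]
          · simp [this, Finsupp.single_apply, hl]
        simpa using LinearMap.congr_fun this x
      have h3 := h2 ((g : Mat n) *ᵥ b j)
      rw [h1] at h3
      simp only [map_smul, Finsupp.smul_apply, smul_eq_mul] at h3
      exact mul_right_cancel₀ hi h3
    obtain ⟨c, hc⟩ := hprop _ hG _ (hγ i) hpe
    refine ⟨i, c, ?_, ?_⟩
    · rintro rfl
      exact hne (g * γ j) (by simpa using hc)
    · rw [e, hc, hγb]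
  · rw [← hγb j]
    exact hcs g hg h hh _ (hγ j)

/-- If the commutator subgroup of an irreducible matrix group is
diagonalizable, then the group is simultaneously similar to a monomial group with
commutative pattern. -/
theorem stmt13 {n : ℕ} (G : Subgroup (Mat n)ˣ)
    (hirr : IrreducibleSet ((fun u : (Mat n)ˣ => (u : Mat n)) '' G))
    (hdiag : ∃ T : Mat n, IsUnit T ∧
      ∀ A ∈ ⁅G, G⁆, (T⁻¹ * (A : Mat n) * T).IsDiag) :
    ∃ T : Mat n, IsUnit T ∧
      (∀ A ∈ G, IsMonomialMat (T⁻¹ * (A : Mat n) * T)) ∧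
      ∀ A ∈ G, ∀ B ∈ G,
        patMat (T⁻¹ * (A : Mat n) * T) * patMat (T⁻¹ * (B : Mat n) * T) =
          patMat (T⁻¹ * (B : Mat n) * T) * patMat (T⁻¹ * (A : Mat n) * T) := by
  obtain ⟨T, hT, hd⟩ := hdiag
  rcases Nat.eq_zero_or_pos n with rfl | hn
  · exact ⟨1, isUnit_one, fun A _ => ⟨fun i => i.elim0, fun i => i.elim0⟩,
      fun A _ B _ => Subsingleton.elim _ _⟩
  have hTd : IsUnit T.det := (Matrix.isUnit_iff_isUnit_det T).1 hT
  obtain ⟨b, h1, h2⟩ := aux_main_s13 G hirr hn.ne' (by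
    intro A hA B hB
    apply Units.ext
    have hAB : (T⁻¹ * (A : Mat n) * T) * (T⁻¹ * (B : Mat n) * T)
        = (T⁻¹ * (B : Mat n) * T) * (T⁻¹ * (A : Mat n) * T) := by
      rw [← (hd A hA).diagonal_diag, ← (hd B hB).diagonal_diag]
      exact Matrix.commute_diagonal _ _
    have e : ∀ X Y : Mat n, (T⁻¹ * X * T) * (T⁻¹ * Y * T) = T⁻¹ * (X * Y) * T := by
      intro X Y
      simp only [Matrix.mul_assoc, Matrix.mul_nonsing_inv_cancel_left _ _ hTd]
    rw [e, e] at hAB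
    have h3 := congrArg (fun X => T * X * T⁻¹) hAB
    simpa [Matrix.mul_assoc, Matrix.mul_nonsing_inv_cancel_left _ _ hTd,
      Matrix.mul_nonsing_inv _ hTd] using h3)
  exact aux_final G b h1 h2
end
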